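/- arXiv:1405.0934 — 18 statements merged into one kernel-verified Lean document; each statement's English description precedes it below -/
import Mathlib

section
/- For all real x with 0 < x < π, the following two-sided inequality holds: (2 − (x/π)³ + cos x)/3 < (sin x)/x < (2 − (x/π)⁴ + cos x)/3. -/
theorem aux_lt (f f' : ℝ → ℝ) (a b : ℝ) (hab : a < b)
    (hd : ∀ t ∈ Set.Icc a b, HasDerivAt f (f' t) t)
    (hp : ∀ t ∈ Set.Ioo a b, 0 < f' t) : f a < f b := by
  have h := strictMonoOn_of_deriv_pos (convex_Icc a b)
    (fun t ht => (hd t ht).continuousAt.continuousWithinAt) (f := f) (by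
      intro t ht
      rw [interior_Icc] at ht
      rw [(hd t ⟨ht.1.le, ht.2.le⟩).deriv]
      exact hp t ht)
  exact h ⟨le_refl a, hab.le⟩ ⟨hab.le, le_refl b⟩ hab

theorem aux_K (x : ℝ) (h0 : 0 < x) (h1 : x < Real.pi) :
    0 < Real.sin x - x * Real.cos x := by
  have := aux_lt (fun t => Real.sin t - t * Real.cos t) (fun t => t * Real.sin t) 0 x h0
    (fun t _ => by
      refine ((Real.hasDerivAt_sin t).sub
        ((hasDerivAt_id' t).mul (Real.hasDerivAt_cos t))).congr_deriv ?_
      ring)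
    (fun t ht => mul_pos ht.1 (Real.sin_pos_of_pos_of_lt_pi ht.1 (ht.2.trans h1)))
  simpa using this

theorem aux_M (x : ℝ) (h0 : 0 < x) (h1 : x < Real.pi) :
    0 < 3 * Real.sin x - 3 * (x * Real.cos x) - x ^ 2 * Real.sin x := by
  have := aux_lt (fun t => 3 * Real.sin t - 3 * (t * Real.cos t) - t ^ 2 * Real.sin t)
    (fun t => t * (Real.sin t - t * Real.cos t)) 0 x h0
    (fun t _ => by
      refine ((((Real.hasDerivAt_sin t).const_mul 3).sub
        (((hasDerivAt_id' t).mul (Real.hasDerivAt_cos t)).const_mul 3)).sub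
        ((hasDerivAt_pow 2 t).mul (Real.hasDerivAt_sin t))).congr_deriv ?_
      norm_num
      ring)
    (fun t ht => mul_pos ht.1 (aux_K t ht.1 (ht.2.trans h1)))
  simpa using this

theorem aux_P1 (x : ℝ) (h0 : 0 < x) (h1 : x < Real.pi) :
    0 < 8 - 8 * Real.cos x - 5 * (x * Real.sin x) + x ^ 2 * Real.cos x := by
  have := aux_lt (fun t => 8 - 8 * Real.cos t - 5 * (t * Real.sin t) + t ^ 2 * Real.cos t)
    (fun t => 3 * Real.sin t - 3 * (t * Real.cos t) - t ^ 2 * Real.sin t) 0 x h0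
    (fun t _ => by
      refine (((((Real.hasDerivAt_cos t).const_mul 8).const_sub 8).sub
        (((hasDerivAt_id' t).mul (Real.hasDerivAt_sin t)).const_mul 5)).add
        ((hasDerivAt_pow 2 t).mul (Real.hasDerivAt_cos t))).congr_deriv ?_
      norm_num
      ring)
    (fun t ht => aux_M t ht.1 (ht.2.trans h1))
  simpa using this

theorem aux_P (x : ℝ) (h0 : 0 < x) (h1 : x < Real.pi) :
    0 < 8 * x + 7 * (x * Real.cos x) + x ^ 2 * Real.sin x - 15 * Real.sin x := by
  have := aux_lt
    (fun t => 8 * t + 7 * (t * Real.cos t) + t ^ 2 * Real.sin t - 15 * Real.sin t)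
    (fun t => 8 - 8 * Real.cos t - 5 * (t * Real.sin t) + t ^ 2 * Real.cos t) 0 x h0
    (fun t _ => by
      refine (((((hasDerivAt_id' t).const_mul 8).add
        (((hasDerivAt_id' t).mul (Real.hasDerivAt_cos t)).const_mul 7)).add
        ((hasDerivAt_pow 2 t).mul (Real.hasDerivAt_sin t))).sub
        ((Real.hasDerivAt_sin t).const_mul 15)).congr_deriv ?_
      norm_num
      ring)
    (fun t ht => aux_P1 t ht.1 (ht.2.trans h1))
  simpa using this

theorem aux_N (x : ℝ) (h0 : 0 < x) (h1 : x < Real.pi) :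
    0 < 12 * Real.sin x - 6 * x - 6 * (x * Real.cos x) - x ^ 2 * Real.sin x := by
  have hM := aux_M (x / 2) (by linarith) (by linarith)
  have hc : 0 < Real.cos (x / 2) :=
    Real.cos_pos_of_mem_Ioo ⟨by linarith, by linarith⟩
  have e1 : Real.sin x = 2 * Real.sin (x / 2) * Real.cos (x / 2) := by
    rw [← Real.sin_two_mul]; ring_nf
  have e2 : Real.cos x = 2 * Real.cos (x / 2) ^ 2 - 1 := by
    rw [← Real.cos_two_mul]; ring_nf
  rw [e1, e2]
  have := mul_pos hc hM
  nlinarith [this]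

theorem aux_D (t : ℝ) : HasDerivAt (fun t => 2 * t + t * Real.cos t - 3 * Real.sin t)
    (2 - 2 * Real.cos t - t * Real.sin t) t := by
  refine ((((hasDerivAt_id' t).const_mul 2).add
        ((hasDerivAt_id' t).mul (Real.hasDerivAt_cos t))).sub
        ((Real.hasDerivAt_sin t).const_mul 3)).congr_deriv ?_
  ring

theorem sin_div_bounds_cubic_quartic (x : ℝ) (hx0 : 0 < x) (hxpi : x < Real.pi) :
    (2 - (x / Real.pi) ^ 3 + Real.cos x) / 3 < Real.sin x / x ∧
    Real.sin x / x < (2 - (x / Real.pi) ^ 4 + Real.cos x) / 3 := by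
  have hpi := Real.pi_pos
  have A := aux_lt (fun t => (2 * t + t * Real.cos t - 3 * Real.sin t) / t ^ 4)
    (fun t => (12 * Real.sin t - 6 * t - 6 * (t * Real.cos t) - t ^ 2 * Real.sin t) / t ^ 5)
    x Real.pi hxpi
    (fun t ht => by
      have ht0 : t ≠ 0 := (hx0.trans_le ht.1).ne'
      refine ((aux_D t).div (hasDerivAt_pow 4 t) (pow_ne_zero 4 ht0)).congr_deriv ?_
      norm_num
      field_simp
      ring)
    (fun t ht => div_pos (aux_N t (hx0.trans ht.1) ht.2) (pow_pos (hx0.trans ht.1) 5))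
  have B := aux_lt (fun t => -((2 * t + t * Real.cos t - 3 * Real.sin t) / t ^ 5))
    (fun t => (8 * t + 7 * (t * Real.cos t) + t ^ 2 * Real.sin t - 15 * Real.sin t) / t ^ 6)
    x Real.pi hxpi
    (fun t ht => by
      have ht0 : t ≠ 0 := (hx0.trans_le ht.1).ne'
      refine ((aux_D t).div (hasDerivAt_pow 5 t) (pow_ne_zero 5 ht0)).neg.congr_deriv ?_
      norm_num
      field_simp
      ring)
    (fun t ht => div_pos (aux_P t (hx0.trans ht.1) ht.2) (pow_pos (hx0.trans ht.1) 6))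
  simp only [Real.cos_pi, Real.sin_pi] at A B
  have e3 : (2 * Real.pi + Real.pi * -1 - 3 * 0) / Real.pi ^ 4 = 1 / Real.pi ^ 3 := by
    field_simp; ring
  have e4 : (2 * Real.pi + Real.pi * -1 - 3 * 0) / Real.pi ^ 5 = 1 / Real.pi ^ 4 := by
    field_simp; ring
  rw [e3, div_lt_iff₀ (by positivity)] at A
  rw [e4, neg_lt_neg_iff, lt_div_iff₀ (by positivity)] at B
  have a : 1 / Real.pi ^ 3 * x ^ 4 = (x / Real.pi) ^ 3 * x := by field_simp
  have b : 1 / Real.pi ^ 4 * x ^ 5 = (x / Real.pi) ^ 4 * x := by field_simp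
  rw [a] at A
  rw [b] at B
  constructor
  · rw [lt_div_iff₀ hx0]; linarith
  · rw [div_lt_iff₀ hx0]; linarith
end

section
/- For all real x with 0 < x < π, the following Wilker-type inequality holds: 3 + (x/π)⁴ · x/(sin x) < 2·x/(sin x) + x/(tan x) < 3 + (x/π)³ · x/(sin x). -/
theorem aux_mono {f g : ℝ → ℝ} (h : ∀ x, HasDerivAt f (g x) x) {a b : ℝ}
    (hg : ∀ x, a < x → x < b → 0 < g x) : StrictMonoOn f (Set.Icc a b) := by
  apply strictMonoOn_of_deriv_pos (convex_Icc a b)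
  · exact fun x _ => (h x).continuousAt.continuousWithinAt
  · intro x hx
    rw [interior_Icc] at hx
    rw [(h x).deriv]
    exact hg x hx.1 hx.2

theorem aux_anti {f g : ℝ → ℝ} (h : ∀ x, HasDerivAt f (g x) x) {a b : ℝ}
    (hg : ∀ x, a < x → x < b → g x < 0) : StrictAntiOn f (Set.Icc a b) := by
  apply strictAntiOn_of_deriv_neg (convex_Icc a b)
  · exact fun x _ => (h x).continuousAt.continuousWithinAt
  · intro x hx
    rw [interior_Icc] at hx
    rw [(h x).deriv]
    exact hg x hx.1 hx.2

theorem aux_B {f g : ℝ → ℝ} (h : ∀ x, HasDerivAt f (g x) x) {a b c : ℝ}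
    (hac : a < c) (hcb : c < b)
    (h1 : ∀ x, a < x → x < c → 0 < g x) (h2 : ∀ x, c < x → x < b → g x < 0)
    (fa : f a = 0) (fb : f b < 0) :
    ∃ d, a < d ∧ d < b ∧ (∀ x, a < x → x < d → 0 < f x) ∧ (∀ x, d < x → x ≤ b → f x < 0) ∧
      f d = 0 := by
  have m1 := aux_mono h h1
  have m2 := aux_anti h h2
  have fc : 0 < f c := by
    have := m1 ⟨le_refl a, hac.le⟩ ⟨hac.le, le_refl c⟩ hac
    linarith
  have hcont : ContinuousOn f (Set.Icc c b) := fun x _ => (h x).continuousAt.continuousWithinAt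
  obtain ⟨d, hd, fd⟩ := intermediate_value_Ioo' hcb.le hcont (show (0:ℝ) ∈ Set.Ioo (f b) (f c) from ⟨fb, fc⟩)
  refine ⟨d, hac.trans hd.1, hd.2, ?_, ?_, fd⟩
  · intro x hx1 hx2
    rcases le_total x c with hxc | hxc
    · have := m1 ⟨le_refl a, hac.le⟩ ⟨hx1.le, hxc⟩ hx1
      linarith
    · have := m2 ⟨hxc, (hx2.trans hd.2).le⟩ ⟨hd.1.le, hd.2.le⟩ hx2
      linarith
  · intro x hx1 hx2
    have := m2 ⟨hd.1.le, hd.2.le⟩ ⟨(hd.1.trans hx1).le, hx2⟩ hx1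
    linarith

theorem aux_C {f g : ℝ → ℝ} (h : ∀ x, HasDerivAt f (g x) x) {a b c : ℝ}
    (hac : a < c) (hcb : c < b)
    (h1 : ∀ x, a < x → x < c → 0 < g x) (h2 : ∀ x, c < x → x < b → g x < 0)
    (fa : f a = 0) (fb : 0 ≤ f b) : ∀ x, a < x → x < b → 0 < f x := by
  have m1 := aux_mono h h1
  have m2 := aux_anti h h2
  intro x hx1 hx2
  rcases le_total x c with hxc | hxc
  · have := m1 ⟨le_refl a, hac.le⟩ ⟨hx1.le, hxc⟩ hx1
    linarith
  · have := m2 ⟨hxc, hx2.le⟩ ⟨hcb.le, le_refl b⟩ hx2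
    linarith

theorem aux_D0 (x : ℝ) : HasDerivAt (fun x => 2 * x + x * Real.cos x - 3 * Real.sin x)
    (2 - 2 * Real.cos x - x * Real.sin x) x := by
  have := (((hasDerivAt_id x).const_mul 2).add ((hasDerivAt_id x).mul (Real.hasDerivAt_cos x))).sub
    ((Real.hasDerivAt_sin x).const_mul 3)
  refine HasDerivAt.congr_deriv this ?_
  simp; ring

theorem aux_D1 (x : ℝ) : HasDerivAt (fun x => 2 - 2 * Real.cos x - x * Real.sin x)
    (Real.sin x - x * Real.cos x) x := by
  have := (((Real.hasDerivAt_cos x).const_mul 2).const_sub 2).sub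
    ((hasDerivAt_id x).mul (Real.hasDerivAt_sin x))
  refine HasDerivAt.congr_deriv this ?_
  simp; ring

theorem aux_D2 (x : ℝ) : HasDerivAt (fun x => Real.sin x - x * Real.cos x)
    (x * Real.sin x) x := by
  have := (Real.hasDerivAt_sin x).sub
    ((hasDerivAt_id x).mul (Real.hasDerivAt_cos x))
  refine HasDerivAt.congr_deriv this ?_
  simp

theorem aux_pow (k : ℝ) (n : ℕ) (x : ℝ) :
    HasDerivAt (fun x : ℝ => k * x ^ (n+1)) (k * (n + 1) * x ^ n) x := by
  have := (hasDerivAt_pow (n+1) x).const_mul k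
  refine HasDerivAt.congr_deriv this ?_
  push_cast
  ring

theorem aux_lower (x : ℝ) (hx0 : 0 < x) (hxpi : x < Real.pi) :
    0 < 2 * x + x * Real.cos x - 3 * Real.sin x - 1 / Real.pi ^ 4 * x ^ 5 := by
  have p3 := Real.pi_gt_three
  have p4 := Real.pi_lt_d2
  have hp0 : 0 < Real.pi := Real.pi_pos
  have hp : Real.pi ≠ 0 := hp0.ne'
  set q := 1 / Real.pi ^ 4 with hq
  have hq0 : 0 < q := by positivity
  have hq1 : q * 60 < 1 := by
    rw [hq, div_mul_eq_mul_div, div_lt_one (by positivity)]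
    have : (3:ℝ)^4 < Real.pi ^ 4 := by gcongr
    linarith
  have hqp : q * Real.pi ^ 4 = 1 := by rw [hq]; field_simp
  have e0 : ∀ x, HasDerivAt (fun x => 2 * x + x * Real.cos x - 3 * Real.sin x - q * x ^ 5)
      (2 - 2 * Real.cos x - x * Real.sin x - q * 5 * x ^ 4) x := fun x => by
    refine HasDerivAt.congr_deriv ((aux_D0 x).sub (aux_pow q 4 x)) ?_
    norm_num
  have e1 : ∀ x, HasDerivAt (fun x => 2 - 2 * Real.cos x - x * Real.sin x - q * 5 * x ^ 4)
      (Real.sin x - x * Real.cos x - q * 20 * x ^ 3) x := fun x => by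
    refine HasDerivAt.congr_deriv ((aux_D1 x).sub (aux_pow (q * 5) 3 x)) ?_
    push_cast; ring
  have e2 : ∀ x, HasDerivAt (fun x => Real.sin x - x * Real.cos x - q * 20 * x ^ 3)
      (x * (Real.sin x - q * 60 * x)) x := fun x => by
    refine HasDerivAt.congr_deriv ((aux_D2 x).sub (aux_pow (q * 20) 2 x)) ?_
    push_cast; ring
  have e3 : ∀ x, HasDerivAt (fun x => Real.sin x - q * 60 * x)
      (Real.cos x - q * 60) x := fun x => by
    refine HasDerivAt.congr_deriv ((Real.hasDerivAt_sin x).sub ((hasDerivAt_id x).const_mul (q * 60))) ?_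
    ring
  have hcos : Real.cos (Real.arccos (q * 60)) = q * 60 := Real.cos_arccos (by linarith) hq1.le
  have ha0 : 0 < Real.arccos (q * 60) := Real.arccos_pos.2 hq1
  have ha1 : Real.arccos (q * 60) < Real.pi := by
    have := Real.arccos_lt_pi_div_two.2 (show 0 < q * 60 by positivity)
    linarith
  obtain ⟨c3, c30, c3p, c3a, c3b, -⟩ := aux_B e3 ha0 ha1
    (fun x h0 h1 => by
      have := Real.cos_lt_cos_of_nonneg_of_le_pi h0.le ha1.le h1
      linarith)
    (fun x h0 h1 => by
      have := Real.cos_lt_cos_of_nonneg_of_le_pi ha0.le h1.le h0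
      linarith) (by simp) (by simp; positivity)
  obtain ⟨c2, c20, c2p, c2a, c2b, -⟩ := aux_B e2 c30 c3p
    (fun x h0 h1 => mul_pos h0 (c3a x h0 h1))
    (fun x h0 h1 => mul_neg_of_pos_of_neg (c30.trans h0) (c3b x h0 h1.le)) (by simp) (by
      simp only [Real.sin_pi, Real.cos_pi]
      have : q * 20 * Real.pi ^ 3 * Real.pi = 20 := by linear_combination 20 * hqp
      by_contra hc
      push Not at hc
      nlinarith)
  obtain ⟨c1, c10, c1p, c1a, c1b, -⟩ := aux_B e1 c20 c2p
    c2a (fun x h0 h1 => c2b x h0 h1.le) (by simp) (by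
      simp only [Real.sin_pi, Real.cos_pi]
      linarith)
  refine aux_C e0 c10 c1p c1a (fun x h0 h1 => c1b x h0 h1.le) (by simp) ?_ x hx0 hxpi
  simp only [Real.sin_pi, Real.cos_pi]
  apply le_of_eq
  linear_combination Real.pi * hqp

theorem aux_upper (x : ℝ) (hx0 : 0 < x) (hxpi : x < Real.pi) :
    0 < 1 / Real.pi ^ 3 * x ^ 4 - (2 * x + x * Real.cos x - 3 * Real.sin x) := by
  have p3 := Real.pi_gt_three
  have p4 := Real.pi_lt_d2
  have hp0 : 0 < Real.pi := Real.pi_pos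
  have hp : Real.pi ≠ 0 := hp0.ne'
  set q := 1 / Real.pi ^ 3 with hq
  have hq0 : 0 < q := by positivity
  have hq1 : q * 24 < 1 := by
    rw [hq, div_mul_eq_mul_div, div_lt_one (by positivity)]
    have : (3:ℝ)^3 < Real.pi ^ 3 := by gcongr
    linarith
  have hqp : q * Real.pi ^ 3 = 1 := by rw [hq]; field_simp
  have e0 : ∀ x, HasDerivAt (fun x => q * x ^ 4 - (2 * x + x * Real.cos x - 3 * Real.sin x))
      (q * 4 * x ^ 3 - (2 - 2 * Real.cos x - x * Real.sin x)) x := fun x => by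
    refine HasDerivAt.congr_deriv ((aux_pow q 3 x).sub (aux_D0 x)) ?_
    norm_num
  have e1 : ∀ x, HasDerivAt (fun x => q * 4 * x ^ 3 - (2 - 2 * Real.cos x - x * Real.sin x))
      (q * 12 * x ^ 2 - (Real.sin x - x * Real.cos x)) x := fun x => by
    refine HasDerivAt.congr_deriv ((aux_pow (q * 4) 2 x).sub (aux_D1 x)) ?_
    push_cast; ring
  have e2 : ∀ x, HasDerivAt (fun x => q * 12 * x ^ 2 - (Real.sin x - x * Real.cos x))
      (x * (q * 24 - Real.sin x)) x := fun x => by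
    refine HasDerivAt.congr_deriv ((aux_pow (q * 12) 1 x).sub (aux_D2 x)) ?_
    push_cast; ring
  set a := Real.arcsin (q * 24) with ha
  have hsin : Real.sin a = q * 24 := Real.sin_arcsin (by linarith) hq1.le
  have ha0 : 0 < a := Real.arcsin_pos.2 (by positivity)
  have ha1 : a < Real.pi / 2 := Real.arcsin_lt_pi_div_two.2 hq1
  set b := Real.pi - a with hb
  have hab : a < b := by linarith
  have hbp : b < Real.pi := by linarith
  have s1 : ∀ x, 0 < x → x < a → 0 < x * (q * 24 - Real.sin x) := fun x h0 h1 => by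
    have := Real.sin_lt_sin_of_lt_of_le_pi_div_two (by linarith) ha1.le h1
    exact mul_pos h0 (by linarith)
  have s2 : ∀ x, a < x → x < b → x * (q * 24 - Real.sin x) < 0 := fun x h0 h1 => by
    refine mul_neg_of_pos_of_neg (by linarith) ?_
    rcases le_total x (Real.pi / 2) with h | h
    · have := Real.sin_lt_sin_of_lt_of_le_pi_div_two (by linarith) h h0
      linarith
    · have := Real.sin_lt_sin_of_lt_of_le_pi_div_two (x := a) (y := Real.pi - x)
        (by linarith) (by linarith) (by linarith)
      rw [Real.sin_pi_sub] at this
      linarith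
  have s3 : ∀ x, b < x → x < Real.pi → 0 < x * (q * 24 - Real.sin x) := fun x h0 h1 => by
    have := Real.sin_lt_sin_of_lt_of_le_pi_div_two (x := Real.pi - x) (y := a)
        (by linarith) (by linarith) (by linarith)
    rw [Real.sin_pi_sub] at this
    exact mul_pos (by linarith) (by linarith)
  have m2 := aux_mono e2 s3
  set U2 : ℝ → ℝ := fun x => q * 12 * x ^ 2 - (Real.sin x - x * Real.cos x) with hU2
  set U1 : ℝ → ℝ := fun x => q * 4 * x ^ 3 - (2 - 2 * Real.cos x - x * Real.sin x) with hU1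
  have U20 : U2 0 = 0 := by simp [hU2]
  have U10 : U1 0 = 0 := by simp [hU1]
  have U1p : U1 Real.pi = 0 := by
    simp only [hU1, Real.sin_pi, Real.cos_pi]; linear_combination 4 * hqp
  have U2p : 0 < U2 Real.pi := by
    simp only [hU2, Real.sin_pi, Real.cos_pi]
    have : q * 12 * Real.pi ^ 2 * Real.pi = 12 := by linear_combination 12 * hqp
    by_contra hc
    push Not at hc
    nlinarith
  have U2b : U2 b < 0 := by
    by_contra hc
    push Not at hc
    have k1 := aux_C e2 ha0 hab s1 s2 U20 hc
    have k2 : ∀ x, b < x → x < Real.pi → 0 < U2 x := fun x h0 h1 => by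
      have := m2 ⟨le_refl b, hbp.le⟩ ⟨h0.le, h1.le⟩ h0
      linarith
    have t1 := aux_mono e1 k1 ⟨le_refl 0, (ha0.trans hab).le⟩ ⟨(ha0.trans hab).le, le_refl b⟩ (ha0.trans hab)
    have t2 := aux_mono e1 k2 ⟨le_refl b, hbp.le⟩ ⟨hbp.le, le_refl _⟩ hbp
    linarith
  obtain ⟨b', hb0, hb1, b1, b2, -⟩ := aux_B e2 ha0 hab s1 s2 U20 U2b
  have hcont : ContinuousOn U2 (Set.Icc b Real.pi) := fun x _ => (e2 x).continuousAt.continuousWithinAt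
  obtain ⟨c, hc, fc⟩ := intermediate_value_Ioo hbp.le hcont (show (0:ℝ) ∈ Set.Ioo (U2 b) (U2 Real.pi) from ⟨U2b, U2p⟩)
  have k2 : ∀ x, b' < x → x < c → U2 x < 0 := fun x h0 h1 => by
    rcases le_total x b with h | h
    · exact b2 x h0 h
    · have := m2 ⟨h, (h1.trans hc.2).le⟩ ⟨hc.1.le, hc.2.le⟩ h1
      linarith
  have k3 : ∀ x, c < x → x < Real.pi → 0 < U2 x := fun x h0 h1 => by
    have := m2 ⟨hc.1.le, hc.2.le⟩ ⟨(hc.1.trans h0).le, h1.le⟩ h0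
    linarith
  have k4 : ∀ x, c ≤ x → x < Real.pi → U1 x < 0 := fun x h0 h1 => by
    have := aux_mono e1 k3 ⟨h0, h1.le⟩ ⟨hc.2.le, le_refl _⟩ h1
    linarith
  obtain ⟨d, d0, dc, d1, d2, -⟩ := aux_B e1 hb0 (hb1.trans hc.1) b1 k2 U10 (k4 c le_rfl hc.2)
  refine aux_C e0 d0 (dc.trans hc.2) d1 (fun x h0 h1 => ?_) (by simp) ?_ x hx0 hxpi
  · rcases le_total x c with h | h
    · exact d2 x h0 h
    · exact k4 x h h1
  · simp only [Real.sin_pi, Real.cos_pi]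
    apply le_of_eq
    linear_combination -Real.pi * hqp

theorem wilker_type_inequality (x : ℝ) (hx0 : 0 < x) (hxpi : x < Real.pi) :
    3 + (x / Real.pi) ^ 4 * (x / Real.sin x) < 2 * (x / Real.sin x) + x * Real.cos x / Real.sin x ∧
    2 * (x / Real.sin x) + x * Real.cos x / Real.sin x < 3 + (x / Real.pi) ^ 3 * (x / Real.sin x) := by
  have hs : 0 < Real.sin x := Real.sin_pos_of_pos_of_lt_pi hx0 hxpi
  have hp : Real.pi ≠ 0 := Real.pi_pos.ne'
  have hl := div_pos (aux_lower x hx0 hxpi) hs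
  have hu := div_pos (aux_upper x hx0 hxpi) hs
  constructor
  · rw [← sub_pos]
    refine lt_of_lt_of_eq hl ?_
    field_simp
    ring
  · rw [← sub_pos]
    refine lt_of_lt_of_eq hu ?_
    field_simp
    ring
end

section
/- For all real x with 0 < x < π/2, the following two-sided inequality holds: (1 − x²/π²)^(π²/6) < (sin x)/x < (1 − x²/π²)^(3/2). -/
open Filter Topology in
theorem aux_S : Tendsto (fun N : ℕ => ∑ j ∈ Finset.range N, (1:ℝ) / ((j:ℝ)+1)^2) atTop (𝓝 (Real.pi^2/6)) := by
  have h := (hasSum_nat_add_iff' 1).2 hasSum_zeta_two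
  have h2 := h.tendsto_sum_nat
  simpa using h2

theorem aux_bern (t : ℝ) (h0 : 0 < t) (h1 : t < 1) (j : ℕ) (hj : 1 ≤ j) :
    (1 - t) ^ ((1:ℝ) / ((j:ℝ)+1)^2) < 1 - t / ((j:ℝ)+1)^2 := by
  have hj' : (1:ℝ) ≤ j := by exact_mod_cast hj
  have hp : (1:ℝ) < ((j:ℝ)+1)^2 := by nlinarith
  have := rpow_one_add_lt_one_add_mul_self (s := -t) (by linarith) (neg_ne_zero.2 h0.ne')
    (p := (1:ℝ) / ((j:ℝ)+1)^2) (by positivity) (by rw [div_lt_one (by linarith)]; exact hp)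
  calc _ = (1 + -t) ^ ((1:ℝ) / ((j:ℝ)+1)^2) := by rw [sub_eq_add_neg]
    _ < _ := this
    _ = _ := by ring

theorem aux_lower_s3 (t : ℝ) (h0 : 0 < t) (h1 : t < 1) (N : ℕ) (hN : 2 ≤ N) :
    ((1 - t/4) / (1-t)^((1:ℝ)/4)) * (1-t) ^ (∑ j ∈ Finset.range N, (1:ℝ) / ((j:ℝ)+1)^2)
      ≤ ∏ j ∈ Finset.range N, (1 - t / ((j:ℝ)+1)^2) := by
  have hp : 0 < 1 - t := by linarith
  induction N, hN using Nat.le_induction with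
  | base =>
    have hq := Real.rpow_pos_of_pos hp ((1:ℝ)/4)
    simp only [Finset.sum_range_succ, Finset.prod_range_succ, Finset.sum_range_zero, Finset.prod_range_zero]
    norm_num
    rw [show (5/4:ℝ) = 1 + 1/4 by norm_num, Real.rpow_add hp, Real.rpow_one]
    apply le_of_eq
    field_simp
  | succ n hn ih =>
    rw [Finset.sum_range_succ, Finset.prod_range_succ, Real.rpow_add hp, ← mul_assoc]
    have hq := Real.rpow_pos_of_pos hp ((1:ℝ) / ((n:ℝ)+1)^2)
    have hb := aux_bern t h0 h1 n (by omega)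
    have hc : 0 ≤ ((1 - t/4) / (1-t)^((1:ℝ)/4)) * (1-t) ^ (∑ j ∈ Finset.range n, (1:ℝ) / ((j:ℝ)+1)^2) :=
      mul_nonneg (div_nonneg (by linarith) (Real.rpow_nonneg hp.le _)) (Real.rpow_nonneg hp.le _)
    exact mul_le_mul ih hb.le hq.le (hc.trans ih)

theorem aux_upper_s3 (t : ℝ) (h0 : 0 < t) (h1 : t < 1) (N : ℕ) (hN : 1 ≤ N) :
    ∏ j ∈ Finset.range N, (1 - t / ((j:ℝ)+1)^2) ≤
    (1-t) * Real.exp (-t * ((∑ j ∈ Finset.range N, (1:ℝ) / ((j:ℝ)+1)^2) - 1)) := by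
  have hp : 0 < 1 - t := by linarith
  induction N, hN using Nat.le_induction with
  | base => simp
  | succ n hn ih =>
    rw [Finset.sum_range_succ, Finset.prod_range_succ]
    have hb := aux_bern t h0 h1 n (by omega)
    have hq := Real.rpow_pos_of_pos hp ((1:ℝ) / ((n:ℝ)+1)^2)
    have he := Real.add_one_le_exp (-t / ((n:ℝ)+1)^2)
    have : ∀ S a : ℝ, -t * (S + 1/a - 1) = -t * (S-1) + -t/a := fun S a => by ring
    rw [this, Real.exp_add, ← mul_assoc]
    refine mul_le_mul ih ?_ (hq.trans hb).le (by positivity)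
    rw [neg_div] at he ⊢
    linarith

theorem aux_final (t : ℝ) (h0 : 0 < t) (h1 : t < 1/4) :
    (1-t) * Real.exp (-t * (Real.pi^2/6 - 1)) < (1-t) ^ ((3:ℝ)/2) := by
  have hp : 0 < 1 - t := by linarith
  rw [show (3/2:ℝ) = 1 + 1/2 by norm_num, Real.rpow_add hp, Real.rpow_one, ← Real.sqrt_eq_rpow]
  refine mul_lt_mul_of_pos_left ?_ hp
  apply Real.lt_sqrt_of_sq_lt
  rw [← Real.exp_nat_mul]
  have hpi := Real.pi_gt_d2
  have h2 : Real.exp ((2:ℕ) * (-t * (Real.pi^2/6 - 1))) ≤ Real.exp (-(1.28 * t)) := by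
    apply Real.exp_le_exp.2
    push_cast
    have : (1.28:ℝ) ≤ 2 * (Real.pi^2/6 - 1) := by nlinarith
    nlinarith
  refine h2.trans_lt ?_
  rw [Real.exp_neg]
  have h3 := Real.quadratic_le_exp_of_nonneg (x := 1.28 * t) (by positivity)
  rw [inv_lt_iff_one_lt_mul₀ (Real.exp_pos _)]
  have h4 : 1 < (1-t) * (1 + 1.28*t + (1.28*t)^2/2) := by
    nlinarith [mul_pos h0 h0, mul_pos h0 (sub_pos.2 h1), mul_pos (mul_pos h0 h0) (sub_pos.2 h1)]
  exact h4.trans_le (mul_le_mul_of_nonneg_left h3 hp.le)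

open Filter Topology in
theorem sin_div_rpow_bounds (x : ℝ) (hx0 : 0 < x) (hxpi : x < Real.pi / 2) :
    (1 - x ^ 2 / Real.pi ^ 2) ^ (Real.pi ^ 2 / 6) < Real.sin x / x ∧
    Real.sin x / x < (1 - x ^ 2 / Real.pi ^ 2) ^ ((3 : ℝ) / 2) := by
  have hpi := Real.pi_pos
  have hE := (Real.tendsto_euler_sin_prod (x / Real.pi)).div_const x
  have e1 : Real.pi * (x / Real.pi) = x := by field_simp
  simp only [e1, div_pow, mul_div_assoc] at hE
  have hE' : Tendsto (fun N : ℕ => ∏ j ∈ Finset.range N, (1 - (x^2/Real.pi^2) / ((j:ℝ)+1)^2)) atTop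
      (𝓝 (Real.sin x / x)) := by
    refine hE.congr fun n => ?_
    field_simp
  have h0 : 0 < x^2/Real.pi^2 := by positivity
  have h1 : x^2/Real.pi^2 < 1/4 := by
    rw [div_lt_iff₀ (by positivity)]; nlinarith
  generalize x^2/Real.pi^2 = t at *
  have hp : 0 < 1 - t := by linarith
  constructor
  · have hl : Tendsto (fun N : ℕ => ((1 - t/4) / (1-t)^((1:ℝ)/4)) * (1-t) ^ (∑ j ∈ Finset.range N, (1:ℝ) / ((j:ℝ)+1)^2)) atTop
        (𝓝 (((1 - t/4) / (1-t)^((1:ℝ)/4)) * (1-t) ^ (Real.pi^2/6))) :=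
      ((Real.continuousAt_const_rpow hp.ne').tendsto.comp aux_S).const_mul _
    have := le_of_tendsto_of_tendsto hl hE' (by
      filter_upwards [eventually_ge_atTop 2] with N hN using aux_lower_s3 t h0 (by linarith) N hN)
    refine lt_of_lt_of_le ?_ this
    have hb := aux_bern t h0 (by linarith) 1 le_rfl
    norm_num at hb
    have hc : 1 < (1 - t/4) / (1-t)^((1:ℝ)/4) := by
      rw [one_lt_div (Real.rpow_pos_of_pos hp _)]
      norm_num
      exact hb
    exact lt_mul_of_one_lt_left (Real.rpow_pos_of_pos hp _) hc
  · have hu : Tendsto (fun N : ℕ => (1-t) * Real.exp (-t * ((∑ j ∈ Finset.range N, (1:ℝ) / ((j:ℝ)+1)^2) - 1))) atTop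
        (𝓝 ((1-t) * Real.exp (-t * (Real.pi^2/6 - 1)))) :=
      ((Real.continuous_exp.tendsto _).comp ((aux_S.sub_const 1).const_mul (-t))).const_mul _
    have := le_of_tendsto_of_tendsto hE' hu (by
      filter_upwards [eventually_ge_atTop 1] with N hN using aux_upper_s3 t h0 (by linarith) N hN)
    exact this.trans_lt (aux_final t h0 h1)
end

section
/- For all real x with 0 < x < π, the following two-sided inequality holds: 1 − (x/π)²·(2 − x/π) < (sin x)/x < 1 − (1/2)·(x/π)²·(3 − (x/π)²). -/
lemma nonneg_of_deriv_aux (f g : ℝ → ℝ) (h0 : f 0 = 0) (hd : ∀ x, HasDerivAt f (g x) x)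
    (hg : ∀ x, 0 ≤ x → 0 ≤ g x) (x : ℝ) (hx : 0 ≤ x) : 0 ≤ f x := by
  have hm : MonotoneOn f (Set.Ici 0) := by
    apply monotoneOn_of_deriv_nonneg (convex_Ici 0)
    · exact fun y _ => (hd y).continuousAt.continuousWithinAt
    · exact fun y _ => (hd y).differentiableAt.differentiableWithinAt
    · intro y hy
      rw [interior_Ici] at hy
      rw [(hd y).deriv]
      exact hg y (le_of_lt hy)
  have := hm (Set.mem_Ici.2 le_rfl) (Set.mem_Ici.2 hx) hx
  rwa [h0] at this

lemma taylor_aux (x : ℝ) (hx : 0 ≤ x) :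
    Real.sin x ≤ x - x^3/6 + x^5/120 ∧ x - x^3/6 + x^5/120 - x^7/5040 ≤ Real.sin x := by
  have pw : ∀ (n : ℕ) (c x : ℝ), HasDerivAt (fun y : ℝ => y^n/c) (n*x^(n-1)/c) x :=
    fun n c x => (hasDerivAt_pow n x).div_const c
  have c2 : ∀ x : ℝ, 0 ≤ x → 0 ≤ Real.cos x - (1 - x^2/2) := fun x _ => by
    linarith [Real.one_sub_sq_div_two_le_cos (x := x)]
  have s3 := nonneg_of_deriv_aux (fun x => Real.sin x - (x - x^3/6)) _ (by simp)
    (fun x => ((Real.hasDerivAt_sin x).sub ((hasDerivAt_id x).sub (pw 3 6 x))))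
    (fun x hx => by have := c2 x hx; norm_num; linarith)
  have c4 := nonneg_of_deriv_aux (fun x => (1 - x^2/2 + x^4/24) - Real.cos x) _ (by simp)
    (fun x => ((((hasDerivAt_const x (1:ℝ)).sub (pw 2 2 x)).add (pw 4 24 x)).sub
      (Real.hasDerivAt_cos x)))
    (fun x hx => by have := s3 x hx; norm_num at this ⊢; linarith)
  have s5 := nonneg_of_deriv_aux (fun x => (x - x^3/6 + x^5/120) - Real.sin x) _ (by simp)
    (fun x => ((((hasDerivAt_id x).sub (pw 3 6 x)).add (pw 5 120 x)).sub
      (Real.hasDerivAt_sin x)))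
    (fun x hx => by have := c4 x hx; norm_num at this ⊢; linarith)
  have c6 := nonneg_of_deriv_aux (fun x => Real.cos x - (1 - x^2/2 + x^4/24 - x^6/720)) _ (by simp)
    (fun x => (Real.hasDerivAt_cos x).sub
      ((((hasDerivAt_const x (1:ℝ)).sub (pw 2 2 x)).add (pw 4 24 x)).sub (pw 6 720 x)))
    (fun x hx => by have := s5 x hx; norm_num at this ⊢; linarith)
  have s7 := nonneg_of_deriv_aux (fun x => Real.sin x - (x - x^3/6 + x^5/120 - x^7/5040)) _
    (by simp)
    (fun x => (Real.hasDerivAt_sin x).sub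
      ((((hasDerivAt_id x).sub (pw 3 6 x)).add (pw 5 120 x)).sub (pw 7 5040 x)))
    (fun x hx => by have := c6 x hx; norm_num at this ⊢; linarith)
  have a := s5 x hx
  have b := s7 x hx
  constructor <;> linarith

lemma pi_sq_aux : 9.869 < Real.pi^2 ∧ Real.pi^2 < 9.87 := by
  have h1 := Real.pi_gt_d6
  have h2 := Real.pi_lt_d6
  constructor <;> nlinarith

lemma lower_aux (t : ℝ) (h0 : 0 < t) (h1 : t ≤ 1/2) :
    Real.pi * (t * (1 - t) * (1 + t * (1 - t))) < Real.sin (Real.pi * t) := by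
  have hp := Real.pi_pos
  refine lt_of_lt_of_le ?_ (taylor_aux (Real.pi * t) (by positivity)).2
  obtain ⟨q1, q2⟩ := pi_sq_aux
  have key : 0 < 2 - Real.pi^2/6 + (Real.pi^2)^2*t^2/120 - (Real.pi^2)^3*t^4/5040 - t := by
    generalize Real.pi^2 = q at *
    have e1 : 97.3 ≤ q^2 := by nlinarith
    have e2 : q^3 ≤ 962 := by
      calc q^3 ≤ 9.87^3 := by gcongr
        _ ≤ 962 := by norm_num
    have f1 : 97.3*t^2 ≤ q^2*t^2 := by gcongr
    have f2 : q^3*t^4 ≤ 962*t^4 := by gcongr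
    have f3 : t^4 ≤ t^2/4 := by nlinarith [sq_nonneg t, mul_nonneg (sq_nonneg t) (by nlinarith : 0 ≤ 1/4 - t^2)]
    nlinarith
  have := mul_pos (mul_pos hp (pow_pos h0 3)) key
  linear_combination this

lemma upper_aux1 (t : ℝ) (h0 : 0 < t) (h1 : t ≤ 2/3) :
    Real.sin (Real.pi * t) < Real.pi * (t * (1 - t^2) * (2 - t^2) / 2) := by
  have hp := Real.pi_pos
  refine lt_of_le_of_lt (taylor_aux (Real.pi * t) (by positivity)).1 ?_
  obtain ⟨q1, q2⟩ := pi_sq_aux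
  have key : 0 < Real.pi^2/6 - 3/2 + t^2/2 - (Real.pi^2)^2*t^2/120 := by
    generalize Real.pi^2 = q at *
    have e1 : q^2 ≤ 97.5 := by nlinarith
    have f1 : q^2*t^2 ≤ 97.5*t^2 := by gcongr
    nlinarith
  have := mul_pos (mul_pos hp (pow_pos h0 3)) key
  linear_combination this

lemma upper_aux2 (s : ℝ) (h0 : 0 < s) (h1 : s ≤ 1/3) :
    Real.sin (Real.pi * s) < Real.pi * ((1-s) * (1 - (1-s)^2) * (2 - (1-s)^2) / 2) := by
  have hp := Real.pi_pos
  refine lt_of_le_of_lt (taylor_aux (Real.pi * s) (by positivity)).1 ?_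
  obtain ⟨q1, q2⟩ := pi_sq_aux
  have key : 0 < 1/2 - 7/2*s + 5/2*s^2 - s^3/2 + Real.pi^2*s/6 - (Real.pi^2)^2*s^3/120 := by
    generalize Real.pi^2 = q at *
    have e1 : q^2 ≤ 97.5 := by nlinarith
    have f1 : q^2*s^3 ≤ 97.5*s^3 := by gcongr
    have f2 : 9.869*s ≤ q*s := by gcongr
    have f3 : s^3 ≤ s^2/3 := by nlinarith [sq_nonneg s]
    nlinarith [sq_nonneg (s - 1/3)]
  have := mul_pos (mul_pos hp (pow_pos h0 2)) key
  linear_combination this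

theorem sin_div_cubic_bounds (x : ℝ) (hx0 : 0 < x) (hxpi : x < Real.pi) :
    1 - (x / Real.pi) ^ 2 * (2 - x / Real.pi) < Real.sin x / x ∧
    Real.sin x / x < 1 - (1 / 2) * (x / Real.pi) ^ 2 * (3 - (x / Real.pi) ^ 2) := by
  have hp := Real.pi_pos
  obtain ⟨t, rfl⟩ : ∃ t, x = Real.pi * t := ⟨x / Real.pi, by field_simp⟩
  have h0 : 0 < t := pos_of_mul_pos_right hx0 hp.le
  have h1 : t < 1 := by nlinarith
  have e : Real.pi * t / Real.pi = t := by field_simp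
  have hs : Real.sin (Real.pi * (1 - t)) = Real.sin (Real.pi * t) := by
    rw [mul_sub, mul_one, Real.sin_pi_sub]
  rw [e, lt_div_iff₀ hx0, div_lt_iff₀ hx0]
  constructor
  · rcases le_total t (1/2) with h | h
    · linear_combination lower_aux t h0 h
    · have := lower_aux (1 - t) (by linarith) (by linarith)
      rw [hs] at this
      linear_combination this
  · rcases le_total t (2/3) with h | h
    · linear_combination upper_aux1 t h0 h
    · have := upper_aux2 (1 - t) (by linarith) (by linarith)
      rw [hs] at this
      linear_combination this
end

section
/- For all real x, y with 0 < x < 1 and 0 < y < 1, the Euler beta function satisfies B(x, y) < (1/(x·y))·(x + y)/(1 + x·y). -/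
theorem beta_aux_tendsto (x y : ℝ) (hx0 : 0 < x) (hy0 : 0 < y) :
    Filter.Tendsto (fun n : ℕ => ((n.factorial : ℝ) * ∏ j ∈ Finset.range (n+1), ((x + y + j) / ((x + j) * (y + j))))
      * ((n + 1) / (n + 1 + x * y))) Filter.atTop
      (nhds (Real.Gamma x * Real.Gamma y / Real.Gamma (x + y))) := by
  have h1 := ((Real.GammaSeq_tendsto_Gamma x).mul (Real.GammaSeq_tendsto_Gamma y)).div
    (Real.GammaSeq_tendsto_Gamma (x + y)) (Real.Gamma_pos_of_pos (by positivity)).ne'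
  have h2 : Filter.Tendsto (fun n : ℕ => ((n : ℝ) + 1) / (n + 1 + x * y)) Filter.atTop (nhds 1) := by
    have h3 := (tendsto_natCast_div_add_atTop (𝕜 := ℝ) (x * y)).comp (Filter.tendsto_add_atTop_nat 1)
    refine h3.congr fun n => ?_
    simp
  have h4 := h1.mul h2
  rw [mul_one] at h4
  refine h4.congr' ?_
  filter_upwards [Filter.eventually_gt_atTop 0] with n hn
  have hn' : (0 : ℝ) < n := by exact_mod_cast hn
  congr 1
  simp only [Pi.div_apply, Pi.mul_apply, Real.GammaSeq]
  rw [Finset.prod_div_distrib, Finset.prod_mul_distrib, Real.rpow_add hn']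
  have a1 : (0 : ℝ) < ∏ j ∈ Finset.range (n+1), (x + j) := Finset.prod_pos fun j _ => by positivity
  have a2 : (0 : ℝ) < ∏ j ∈ Finset.range (n+1), (y + j) := Finset.prod_pos fun j _ => by positivity
  have a3 : (0 : ℝ) < ∏ j ∈ Finset.range (n+1), (x + y + j) :=
    Finset.prod_pos fun j _ => by positivity
  have a4 := Real.rpow_pos_of_pos hn' x
  have a5 := Real.rpow_pos_of_pos hn' y
  have a6 : (0 : ℝ) < n.factorial := by exact_mod_cast n.factorial_pos
  field_simp

theorem beta_aux_anti (x y : ℝ) (hx0 : 0 < x) (hx1 : x < 1) (hy0 : 0 < y) (hy1 : y < 1) :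
    StrictAnti (fun n : ℕ => ((n.factorial : ℝ) * ∏ j ∈ Finset.range (n+1), ((x + y + j) / ((x + j) * (y + j))))
      * ((n + 1) / (n + 1 + x * y))) := by
  refine strictAnti_nat_of_succ_lt fun n => ?_
  rw [Finset.prod_range_succ _ (n+1), Nat.factorial_succ]
  have hP : (0 : ℝ) < ∏ j ∈ Finset.range (n+1), ((x + y + j) / ((x + j) * (y + j))) :=
    Finset.prod_pos fun j _ => by positivity
  have a6 : (0 : ℝ) < n.factorial := by exact_mod_cast n.factorial_pos
  set P := ∏ j ∈ Finset.range (n+1), ((x + y + j) / ((x + j) * (y + j)))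
  push_cast
  have hm : (0 : ℝ) < (n : ℝ) + 1 := by positivity
  set m : ℝ := (n : ℝ) + 1
  have key : (x + y + m) / ((x + m) * (y + m)) * ((m + 1) / (m + 1 + x * y)) < 1 / (m + x * y) := by
    rw [div_mul_div_comm, div_lt_div_iff₀ (by positivity) (by positivity)]
    have : 0 < (x * y) * ((1 - x) * (1 - y)) :=
      mul_pos (mul_pos hx0 hy0) (mul_pos (by linarith) (by linarith))
    nlinarith
  have := mul_lt_mul_of_pos_left key (mul_pos (mul_pos hm a6) hP)
  calc _ = _ := by ring
    _ < _ := this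
    _ = _ := by ring

theorem beta_upper_bound (x y : ℝ) (hx0 : 0 < x) (hx1 : x < 1) (hy0 : 0 < y) (hy1 : y < 1) :
    Real.Gamma x * Real.Gamma y / Real.Gamma (x + y) < (1 / (x * y)) * ((x + y) / (1 + x * y)) := by
  have ha := beta_aux_anti x y hx0 hx1 hy0 hy1
  have h1 := ha.antitone.le_of_tendsto (beta_aux_tendsto x y hx0 hy0) 1
  have h2 := ha (Nat.zero_lt_one)
  refine (h1.trans_lt h2).trans_eq ?_
  simp
  field_simp
end

section
/- For all real x, y with 1 < x and 0 < y < 1, the Euler beta function satisfies (1/(x·y))·(x + y)/(1 + x·y) < B(x, y). -/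
theorem beta_lower_bound (x y : ℝ) (hx : 1 < x) (hy0 : 0 < y) (hy1 : y < 1) :
    (1 / (x * y)) * ((x + y) / (1 + x * y)) < Real.Gamma x * Real.Gamma y / Real.Gamma (x + y) := by
  have hx0 : 0 < x := by linarith
  have hp : 0 < x * y := mul_pos hx0 hy0
  let P : ℝ → ℕ → ℝ := fun s n => ∏ j ∈ Finset.range (n + 1), (s + j)
  have hP : ∀ s n, 0 < s → 0 < P s n := fun s n hs =>
    Finset.prod_pos (fun j _ => by positivity)
  have hPs : ∀ s n, P s (n + 1) = P s n * (s + n + 1) := by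
    intro s n
    simp only [P]
    rw [Finset.prod_range_succ _ (n + 1)]
    push_cast
    ring
  let B : ℕ → ℝ := fun n => (n.factorial : ℝ) * P (x + y) n / (P x n * P y n)
  let c : ℕ → ℝ := fun n => B n * ((n + 1) / (n + 1 + x * y))
  have hBpos : ∀ n, 0 < B n := fun n => by
    have h1 := hP x n hx0
    have h2 := hP y n hy0
    have h3 := hP (x + y) n (by linarith)
    have h4 : (0 : ℝ) < n.factorial := by exact_mod_cast n.factorial_pos
    simp only [B]
    positivity
  have hBs : ∀ n : ℕ, B (n + 1) = B n * ((n + 1) * (x + y + n + 1) / ((x + n + 1) * (y + n + 1))) := by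
    intro n
    have h1 := (hP x n hx0).ne'
    have h2 := (hP y n hy0).ne'
    have h5 : x + n + 1 ≠ 0 := by positivity
    have h6 : y + n + 1 ≠ 0 := by positivity
    simp only [B, hPs, Nat.factorial_succ]
    push_cast
    field_simp
  have hlt : ∀ n, c n < c (n + 1) := by
    intro n
    simp only [c, hBs]
    rw [mul_assoc]
    apply mul_lt_mul_of_pos_left _ (hBpos n)
    push_cast
    rw [div_mul_div_comm, div_lt_div_iff₀ (by positivity) (by positivity)]
    have hn : (0 : ℝ) ≤ n := n.cast_nonneg
    have key : 0 < ((n : ℝ) + 1) * (x * y * ((x - 1) * (1 - y))) := by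
      have : 0 < (x - 1) * (1 - y) := mul_pos (by linarith) (by linarith)
      positivity
    linarith [key]
  have hmono : StrictMono c := strictMono_nat_of_lt_succ hlt
  have hBlim : Filter.Tendsto B Filter.atTop
      (nhds (Real.Gamma x * Real.Gamma y / Real.Gamma (x + y))) := by
    have h := ((Real.GammaSeq_tendsto_Gamma x).mul (Real.GammaSeq_tendsto_Gamma y)).div
      (Real.GammaSeq_tendsto_Gamma (x + y)) (Real.Gamma_pos_of_pos (by linarith)).ne'
    refine h.congr' ?_
    filter_upwards [Filter.eventually_gt_atTop 0] with n hn
    have hn' : (0 : ℝ) < n := by exact_mod_cast hn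
    have h1 := (hP x n hx0).ne'
    have h2 := (hP y n hy0).ne'
    have h3 := (hP (x + y) n (by linarith)).ne'
    have h4 : (n.factorial : ℝ) ≠ 0 := by exact_mod_cast n.factorial_ne_zero
    have h7 := (Real.rpow_pos_of_pos hn' x).ne'
    have h8 := (Real.rpow_pos_of_pos hn' y).ne'
    change ((n : ℝ) ^ x * n.factorial / P x n) * ((n : ℝ) ^ y * n.factorial / P y n) /
      ((n : ℝ) ^ (x + y) * n.factorial / P (x + y) n) = n.factorial * P (x + y) n / (P x n * P y n)
    rw [Real.rpow_add hn']
    generalize (n : ℝ) ^ x = a at *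
    generalize (n : ℝ) ^ y = b at *
    field_simp
  have hf : Filter.Tendsto (fun n : ℕ => ((n : ℝ) + 1) / (n + 1 + x * y)) Filter.atTop (nhds 1) := by
    have h := (tendsto_natCast_div_add_atTop (𝕜 := ℝ) (x * y)).comp (Filter.tendsto_add_atTop_nat 1)
    refine h.congr fun n => ?_
    simp
  have hclim : Filter.Tendsto c Filter.atTop
      (nhds (Real.Gamma x * Real.Gamma y / Real.Gamma (x + y))) := by
    simpa using hBlim.mul hf
  have h0 : c 0 = (1 / (x * y)) * ((x + y) / (1 + x * y)) := by
    simp [c, B, P]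
    field_simp
  rw [← h0]
  exact (hlt 0).trans_le (hmono.monotone.ge_of_tendsto hclim 1)
end

section
/- For all real x with 0 < x < π/2, the following chain of inequalities holds with α = π²/6 − 1 and β = 1/2: (sin x)/x < (π² − x²)/(π² + α·x²) < (2 + cos x)/3 < (π² − x²)/(π² + β·x²). -/
theorem ch_mono (f f' : ℝ → ℝ) (h : ∀ x, HasDerivAt f (f' x) x) (h0 : f 0 = 0)
    (hp : ∀ x, 0 ≤ x → 0 ≤ f' x) : ∀ x, 0 ≤ x → 0 ≤ f x := by
  intro x hx
  have hm : MonotoneOn f (Set.Ici 0) := by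
    apply monotoneOn_of_deriv_nonneg (convex_Ici 0)
    · exact fun y _ => (h y).continuousAt.continuousWithinAt
    · exact fun y _ => (h y).differentiableAt.differentiableWithinAt
    · intro y hy
      rw [interior_Ici] at hy
      rw [(h y).deriv]
      exact hp y (le_of_lt hy)
  have := hm (Set.mem_Ici.2 le_rfl) (Set.mem_Ici.2 hx) hx
  rwa [h0] at this

theorem ch_c2 : ∀ x : ℝ, 0 ≤ x → 0 ≤ Real.cos x - (1 - x ^ 2 / 2) := by
  intro x _
  linarith [Real.one_sub_sq_div_two_le_cos (x := x)]

theorem ch_s3 : ∀ x : ℝ, 0 ≤ x → 0 ≤ Real.sin x - (x - x ^ 3 / 6) := by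
  apply ch_mono _ _ _ _ ch_c2
  · intro x
    have := (Real.hasDerivAt_sin x).sub ((hasDerivAt_id x).sub (((hasDerivAt_id x).pow 3).div_const 6))
    refine HasDerivAt.congr_deriv this ?_
    simp; ring
  · simp

theorem ch_c4 : ∀ x : ℝ, 0 ≤ x → 0 ≤ (1 - x ^ 2 / 2 + x ^ 4 / 24) - Real.cos x := by
  apply ch_mono _ _ _ _ ch_s3
  · intro x
    have := (((hasDerivAt_const x (1:ℝ)).sub (((hasDerivAt_id x).pow 2).div_const 2)).add
      (((hasDerivAt_id x).pow 4).div_const 24)).sub (Real.hasDerivAt_cos x)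
    refine HasDerivAt.congr_deriv this ?_
    simp; ring
  · simp

theorem ch_s5 : ∀ x : ℝ, 0 ≤ x → 0 ≤ (x - x ^ 3 / 6 + x ^ 5 / 120) - Real.sin x := by
  apply ch_mono _ _ _ _ ch_c4
  · intro x
    have := (((hasDerivAt_id x).sub (((hasDerivAt_id x).pow 3).div_const 6)).add
      (((hasDerivAt_id x).pow 5).div_const 120)).sub (Real.hasDerivAt_sin x)
    refine HasDerivAt.congr_deriv this ?_
    simp; ring
  · simp

theorem ch_c6 : ∀ x : ℝ, 0 ≤ x →
    0 ≤ Real.cos x - (1 - x ^ 2 / 2 + x ^ 4 / 24 - x ^ 6 / 720) := by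
  apply ch_mono _ _ _ _ ch_s5
  · intro x
    have := (Real.hasDerivAt_cos x).sub
      ((((hasDerivAt_const x (1:ℝ)).sub (((hasDerivAt_id x).pow 2).div_const 2)).add
      (((hasDerivAt_id x).pow 4).div_const 24)).sub (((hasDerivAt_id x).pow 6).div_const 720))
    refine HasDerivAt.congr_deriv this ?_
    simp; ring
  · simp

theorem cusa_huygens_refinement (x : ℝ) (hx0 : 0 < x) (hxpi : x < Real.pi / 2) :
    Real.sin x / x < (Real.pi ^ 2 - x ^ 2) / (Real.pi ^ 2 + (Real.pi ^ 2 / 6 - 1) * x ^ 2) ∧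
    (Real.pi ^ 2 - x ^ 2) / (Real.pi ^ 2 + (Real.pi ^ 2 / 6 - 1) * x ^ 2) < (2 + Real.cos x) / 3 ∧
    (2 + Real.cos x) / 3 < (Real.pi ^ 2 - x ^ 2) / (Real.pi ^ 2 + (1 / 2) * x ^ 2) := by
  have hs5 := ch_s5 x hx0.le
  have hc4 := ch_c4 x hx0.le
  have hc6 := ch_c6 x hx0.le
  have hy := Real.sin_le (x := Real.pi / 2 - x) (by linarith)
  rw [Real.sin_pi_div_two_sub] at hy
  have p1 := Real.pi_gt_d4
  have p2 := Real.pi_lt_d4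
  have a1 : 9.869 < Real.pi ^ 2 := by nlinarith
  have a2 : Real.pi ^ 2 < 9.87 := by nlinarith
  have s0 : 0 < x ^ 2 := by positivity
  have s1 : x ^ 2 < 2.4675 := by nlinarith
  have hD : 0 < Real.pi ^ 2 + (Real.pi ^ 2 / 6 - 1) * x ^ 2 := by nlinarith
  have hE : 0 < Real.pi ^ 2 + (1 / 2) * x ^ 2 := by positivity
  refine ⟨?_, ?_, ?_⟩
  · have h1 : Real.sin x / x ≤ 1 - x ^ 2 / 6 + (x ^ 2) ^ 2 / 120 := by
      rw [div_le_iff₀ hx0]; linarith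
    refine h1.trans_lt ?_
    rw [lt_div_iff₀ hD]
    generalize x ^ 2 = s at *
    generalize Real.pi ^ 2 = a at *
    have k : 0 < a * (1/36 - 1/120) - 1/6 - (a/6-1)*s/120 := by nlinarith
    nlinarith [mul_pos (mul_pos s0 s0) k]
  · have h1 : 1 - x ^ 2 / 6 + (x ^ 2) ^ 2 / 72 - (x ^ 2) ^ 3 / 2160 ≤ (2 + Real.cos x) / 3 := by
      linarith
    refine lt_of_lt_of_le ?_ h1
    rw [div_lt_iff₀ hD]
    generalize x ^ 2 = s at *
    generalize Real.pi ^ 2 = a at *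
    have k0 : 0 < (a/6-1)/72 - a/2160 - s * (a/6-1)/2160 := by nlinarith
    have k : 0 < 1/6 - a/72 + s * ((a/6-1)/72 - a/2160 - s * (a/6-1)/2160) := by
      have := mul_pos s0 k0
      linarith
    nlinarith [mul_pos (mul_pos s0 s0) k]
  · rw [lt_div_iff₀ hE]
    suffices h : Real.cos x * (Real.pi ^ 2 + (1 / 2) * x ^ 2) < Real.pi ^ 2 - 4 * x ^ 2 by linarith
    rcases le_total x 1.1 with h | h
    · have s2 : x ^ 2 ≤ 1.21 := by nlinarith
      have h1 : Real.cos x ≤ 1 - x ^ 2 / 2 + (x ^ 2) ^ 2 / 24 := by linarith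
      refine (mul_le_mul_of_nonneg_right h1 hE.le).trans_lt ?_
      generalize x ^ 2 = s at *
      generalize Real.pi ^ 2 = a at *
      have k : 0 < a/2 - 9/2 + s * (1/4 - a/24) - s*s/48 := by nlinarith
      nlinarith [mul_pos s0 k]
    · refine (mul_le_mul_of_nonneg_right hy hE.le).trans_lt ?_
      have k : Real.pi ^ 2 + (1 / 2) * x ^ 2 < 2 * (Real.pi + 2 * x) := by nlinarith
      have := mul_pos (sub_pos.2 hxpi) (sub_pos.2 k)
      linarith
end

section
/- The function g(t) = log((1+t²)/(1−t²)) / log(1/cos(πt/2)) is strictly decreasing on the interval (0,1), with range (1, 16/π²). In particular, for all real x with 0 < x < π, one has (cos(x/2))^(16/π²) < (π² − x²)/(π² + x²) < cos(x/2), and the exponents 16/π² and 1 are best possible. -/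
namespace RH
open Real Set Filter Topology

lemma sin_le5 (x : ℝ) (hx : 0 ≤ x) : sin x ≤ x - x^3/6 + x^5/120 := by
  have key : ∀ (F F' : ℝ → ℝ), (∀ y, HasDerivAt F (F' y) y) → F 0 = 0 → (∀ y, 0 ≤ y → 0 ≤ F' y) →
      ∀ y, 0 ≤ y → 0 ≤ F y := by
    intro F F' hd h0 hp y hy
    have := (monotoneOn_of_deriv_nonneg (convex_Ici (0:ℝ)) (f := F)
      (fun z _ => (hd z).continuousAt.continuousWithinAt)
      (fun z _ => (hd z).differentiableAt.differentiableWithinAt)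
      (fun z hz => by
        rw [(hd z).deriv]
        exact hp z (interior_subset hz))) (mem_Ici.2 le_rfl) (mem_Ici.2 hy) hy
    linarith
  have h2 : ∀ y : ℝ, 0 ≤ y → 0 ≤ cos y - 1 + y^2/2 := fun y _ => by
    have := one_sub_sq_div_two_le_cos (x := y); linarith
  have h3 := key (fun y => sin y - y + y^3/6) (fun y => cos y - 1 + y^2/2)
    (fun y => by
      have := ((hasDerivAt_sin y).sub (hasDerivAt_id y)).add ((hasDerivAt_pow 3 y).div_const 6)
      refine this.congr_deriv ?_
      norm_num; ring) (by simp) h2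
  have h4 := key (fun y => 1 - y^2/2 + y^4/24 - cos y) (fun y => sin y - y + y^3/6)
    (fun y => by
      have := ((((hasDerivAt_const y (1:ℝ)).sub ((hasDerivAt_pow 2 y).div_const 2))).add
        ((hasDerivAt_pow 4 y).div_const 24)).sub (hasDerivAt_cos y)
      refine this.congr_deriv ?_
      norm_num; ring) (by simp) h3
  have h5 := key (fun y => y - y^3/6 + y^5/120 - sin y) (fun y => 1 - y^2/2 + y^4/24 - cos y)
    (fun y => by
      have := ((((hasDerivAt_id y).sub ((hasDerivAt_pow 3 y).div_const 6))).add
        ((hasDerivAt_pow 5 y).div_const 120)).sub (hasDerivAt_sin y)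
      refine this.congr_deriv ?_
      norm_num; ring) (by simp) h4
  have := h5 x hx
  linarith

lemma key_ineq (t : ℝ) (h0 : 0 < t) (h1 : t < 1) :
    sin (π * t) * (1 + 3 * t^4) < π * t * (1 - t^4) := by
  have hpi := Real.pi_pos
  have ht4 : t^4 < 1 := pow_lt_one₀ h0.le h1 (by norm_num)
  rcases le_total t (7/10) with h | h
  · have hs := sin_le5 (π * t) (by positivity)
    have hp1 := Real.pi_gt_d2
    have hp2 := Real.pi_lt_d2
    have hu0 : 0 < t^2 := by positivity
    have hu1 : t^2 ≤ 49/100 := by nlinarith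
    have hA : (9.8:ℝ) < π^2 := by nlinarith
    have hB : π^2 < 9.93 := by nlinarith
    have hC : -(π^2)/6 + π^4 * t^2 /120 ≤ -(9.8)/6 + 9.8^2 * t^2/120 := by
      have : π^4 = (π^2)^2 := by ring
      rw [this]
      nlinarith [mul_nonneg hu0.le (sub_nonneg.2 hA.le), mul_nonneg (sub_nonneg.2 hu1) (sub_nonneg.2 hA.le),
        mul_nonneg (mul_nonneg (sub_nonneg.2 hu1) (sub_nonneg.2 hA.le)) (sub_nonneg.2 hB.le), mul_nonneg (sub_nonneg.2 hA.le) (sub_nonneg.2 hB.le)]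
    have hD : (-(9.8)/6 + 9.8^2 * t^2/120) * (1 + 3 * t^4) + 4 * t^2 < 0 := by
      have : t^4 = (t^2)^2 := by ring
      rw [this]
      generalize t^2 = u at *
      nlinarith [mul_nonneg hu0.le (sub_nonneg.2 hu1), sq_nonneg (u - 49/100), mul_nonneg hu0.le (sq_nonneg (u - 49/100)), mul_nonneg (mul_nonneg hu0.le hu0.le) (sub_nonneg.2 hu1)]
    have hE : (-(π^2)/6 + π^4 * t^2 /120) * (1 + 3 * t^4) + 4 * t^2 < 0 := by
      have := mul_le_mul_of_nonneg_right hC (show 0 ≤ 1 + 3 * t^4 by positivity)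
      linarith
    have hF := mul_le_mul_of_nonneg_right hs (show 0 ≤ 1 + 3 * t^4 by positivity)
    have hG := mul_neg_of_pos_of_neg (show 0 < π * t * t^2 by positivity) hE
    nlinarith
  · have hs : sin (π * t) < π * (1 - t) := by
      rw [← Real.sin_pi_sub, show π - π * t = π * (1 - t) by ring]
      exact sin_lt (mul_pos hpi (by linarith))
    have hF := mul_lt_mul_of_pos_right hs (show 0 < 1 + 3 * t^4 by positivity)
    have hG : (1 - t) * (1 + 3 * t^4) ≤ t * (1 - t^4) := by
      have : 0 ≤ t * (1 + t) * (1 + t^2) - (1 + 3 * t^4) := by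
        have hs1 : 0 ≤ 1 - t := by linarith
        have : t * (1 + t) * (1 + t^2) - (1 + 3 * t^4) = (1-t) * (2 - 8*(1-t) + 7*(1-t)^2 - 2*(1-t)^3) := by ring
        rw [this]
        refine mul_nonneg hs1 ?_
        have : 1 - t ≤ 3/10 := by linarith
        generalize 1 - t = s at *
        nlinarith [mul_nonneg hs1 (sub_nonneg.2 this), mul_nonneg (sq_nonneg s) (sub_nonneg.2 this), sq_nonneg (s - 3/10)]
      nlinarith
    nlinarith

noncomputable def F (t : ℝ) : ℝ := Real.log ((1 + t ^ 2) / (1 - t ^ 2))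
noncomputable def H (t : ℝ) : ℝ := Real.log (1 / Real.cos (Real.pi * t / 2))
noncomputable def F' (t : ℝ) : ℝ := 4 * t / (1 - t^4)
noncomputable def H' (t : ℝ) : ℝ := π / 2 * (sin (π * t / 2) / cos (π * t / 2))

lemma cpos {t : ℝ} (h0 : -1 < t) (h1 : t < 1) : 0 < cos (π * t / 2) := by
  have := Real.pi_pos
  apply cos_pos_of_mem_Ioo
  constructor <;> nlinarith

lemma spos {t : ℝ} (h0 : 0 < t) (h1 : t < 1) : 0 < sin (π * t / 2) := by
  have := Real.pi_pos
  apply sin_pos_of_pos_of_lt_pi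
  · positivity
  · nlinarith

lemma hasF {t : ℝ} (h0 : -1 < t) (h1 : t < 1) : HasDerivAt F (F' t) t := by
  have h2 : 0 < 1 - t^2 := by nlinarith
  have h3 : 0 < 1 + t^2 := by positivity
  have hn : HasDerivAt (fun t : ℝ => 1 + t^2) (2 * t) t := by
    simpa using (hasDerivAt_pow 2 t).const_add 1
  have hd : HasDerivAt (fun t : ℝ => 1 - t^2) (-(2 * t)) t := by
    simpa using (hasDerivAt_pow 2 t).const_sub 1
  have := (hn.div hd h2.ne').log (div_pos h3 h2).ne'
  refine this.congr_deriv ?_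
  have h4 : (1 - t^4) = (1 - t^2) * (1 + t^2) := by ring
  simp only [F', h4, Pi.div_apply]
  field_simp
  ring

lemma hasw (t : ℝ) : HasDerivAt (fun t : ℝ => π * t / 2) (π / 2) t := by
  simpa using ((hasDerivAt_id t).const_mul π).div_const 2

lemma hasH {t : ℝ} (h0 : -1 < t) (h1 : t < 1) : HasDerivAt H (H' t) t := by
  have hc := cpos h0 h1
  have hH : H = fun t => - Real.log (cos (π * t / 2)) := by
    funext t; simp [H, Real.log_inv]
  rw [hH]
  refine (((hasw t).cos.log hc.ne').neg).congr_deriv ?_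
  simp only [H']
  field_simp

lemma F0 : F 0 = 0 := by simp [F]
lemma H0 : H 0 = 0 := by simp [H]

lemma F'pos {t : ℝ} (h0 : 0 < t) (h1 : t < 1) : 0 < F' t := by
  have ht4 : t^4 < 1 := pow_lt_one₀ h0.le h1 (by norm_num)
  exact div_pos (by linarith) (by linarith)
lemma H'pos {t : ℝ} (h0 : 0 < t) (h1 : t < 1) : 0 < H' t :=
  mul_pos (by have := Real.pi_pos; positivity) (div_pos (spos h0 h1) (cpos (by linarith) h1))

lemma ratio_anti : StrictAntiOn (fun t => F' t / H' t) (Ioo 0 1) := by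
  have hpi := Real.pi_pos
  let num : ℝ → ℝ := fun t => t * cos (π * t / 2)
  let den : ℝ → ℝ := fun t => (1 - t^4) * sin (π * t / 2)
  have hder : ∀ t ∈ Ioo (0:ℝ) 1, HasDerivAt (fun t => num t / den t)
      (((1 * cos (π * t / 2) + t * (-sin (π * t / 2) * (π/2))) * den t -
        num t * ((-(4 * t^3)) * sin (π * t / 2) + (1 - t^4) * (cos (π * t / 2) * (π / 2)))) / (den t)^2) t := by
    intro t ht
    have ht4 : t^4 < 1 := pow_lt_one₀ ht.1.le ht.2 (by norm_num)
    have hd : den t ≠ 0 := (mul_pos (by linarith) (spos ht.1 ht.2)).ne'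
    have h4 : HasDerivAt (fun t : ℝ => 1 - t^4) (-(4 * t^3)) t := by
      simpa using (hasDerivAt_pow 4 t).const_sub 1
    exact ((hasDerivAt_id t).mul (hasw t).cos).div (h4.mul (hasw t).sin) hd
  have hanti : StrictAntiOn (fun t => num t / den t) (Ioo 0 1) := by
    apply strictAntiOn_of_deriv_neg (convex_Ioo 0 1)
    · exact fun t ht => (hder t ht).continuousAt.continuousWithinAt
    · intro t ht
      rw [interior_Ioo] at ht
      have ht4 : t^4 < 1 := pow_lt_one₀ ht.1.le ht.2 (by norm_num)
      have hd : 0 < den t := (mul_pos (by linarith) (spos ht.1 ht.2))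
      rw [(hder t ht).deriv]
      refine div_neg_of_neg_of_pos ?_ (by positivity)
      have hk := key_ineq t ht.1 ht.2
      rw [show π * t = 2 * (π * t / 2) by ring, sin_two_mul,
        show 2 * (π * t / 2) = π * t by ring] at hk
      have hsc := sin_sq_add_cos_sq (π * t / 2)
      simp only [num, den]
      generalize sin (π * t / 2) = s at *
      generalize cos (π * t / 2) = c at *
      have : (1 * c + t * (-s * (π / 2))) * ((1 - t ^ 4) * s) -
        t * c * (-(4 * t ^ 3) * s + (1 - t ^ 4) * (c * (π / 2))) =
        s * c * (1 + 3 * t^4) - (π / 2) * t * (1 - t^4) * (s^2 + c^2) := by ring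
      rw [this, hsc]
      nlinarith
  intro a ha b hb hab
  have h := hanti ha hb hab
  have e : ∀ t ∈ Ioo (0:ℝ) 1, F' t / H' t = 8 / π * (num t / den t) := by
    intro t ht
    have ht4 : t^4 < 1 := pow_lt_one₀ ht.1.le ht.2 (by norm_num)
    have := spos ht.1 ht.2
    have := cpos (by linarith [ht.1]) ht.2
    have : 1 - t^4 ≠ 0 := by linarith
    simp only [F', H', num, den]
    field_simp
    ring
  simp only
  rw [e a ha, e b hb]
  exact mul_lt_mul_of_pos_left h (by positivity)

lemma Hpos {t : ℝ} (h0 : 0 < t) (h1 : t < 1) : 0 < H t := by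
  have hmono : StrictMonoOn H (Icc 0 t) := by
    apply strictMonoOn_of_deriv_pos (convex_Icc 0 t)
    · exact fun x hx => (hasH (by linarith [hx.1]) (by linarith [hx.2])).continuousAt.continuousWithinAt
    · intro x hx
      rw [interior_Icc] at hx
      rw [(hasH (by linarith [hx.1]) (by linarith [hx.2])).deriv]
      exact H'pos hx.1 (by linarith [hx.2])
  have := hmono ⟨le_rfl, h0.le⟩ ⟨h0.le, le_rfl⟩ h0
  rwa [H0] at this

lemma g_anti : StrictAntiOn (fun t => F t / H t) (Ioo 0 1) := by
  have hd : ∀ t ∈ Ioo (0:ℝ) 1, HasDerivAt (fun t => F t / H t)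
      ((F' t * H t - F t * H' t) / (H t)^2) t := fun t ht =>
    (hasF (by linarith [ht.1]) ht.2).div (hasH (by linarith [ht.1]) ht.2) (Hpos ht.1 ht.2).ne'
  apply strictAntiOn_of_deriv_neg (convex_Ioo 0 1)
  · exact fun t ht => (hd t ht).continuousAt.continuousWithinAt
  · intro t ht
    rw [interior_Ioo] at ht
    rw [(hd t ht).deriv]
    have hH := Hpos ht.1 ht.2
    refine div_neg_of_neg_of_pos ?_ (by positivity)
    obtain ⟨c, hc, hce⟩ := exists_ratio_hasDerivAt_eq_ratio_slope F F' ht.1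
      (fun x hx => (hasF (by linarith [hx.1]) (by linarith [hx.2, ht.2])).continuousAt.continuousWithinAt)
      (fun x hx => (hasF (by linarith [hx.1]) (by linarith [hx.2, ht.2]))) H H'
      (fun x hx => (hasH (by linarith [hx.1]) (by linarith [hx.2, ht.2])).continuousAt.continuousWithinAt)
      (fun x hx => (hasH (by linarith [hx.1]) (by linarith [hx.2, ht.2])))
    rw [F0, H0, sub_zero, sub_zero] at hce
    have hc1 : c < 1 := hc.2.trans ht.2
    have hr := ratio_anti ⟨hc.1, hc1⟩ ht hc.2
    simp only at hr
    have hHc := H'pos hc.1 hc1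
    have hHt := H'pos ht.1 ht.2
    have e : F t = H t * (F' c / H' c) := by field_simp; linarith
    rw [e]
    rw [div_lt_iff₀ hHt] at hr
    nlinarith

lemma lim0 : Tendsto (fun t => F t / H t) (𝓝[>] 0) (𝓝 (16 / π^2)) := by
  have hpi := Real.pi_pos
  apply HasDerivAt.lhopital_zero_right_on_Ioo (zero_lt_one)
    (fun x hx => hasF (by linarith [hx.1]) hx.2) (fun x hx => hasH (by linarith [hx.1]) hx.2)
    (fun x hx => (H'pos hx.1 hx.2).ne')
  · have := (hasF (t := 0) (by norm_num) (by norm_num)).continuousAt.tendsto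
    rw [F0] at this
    exact this.mono_left nhdsWithin_le_nhds
  · have := (hasH (t := 0) (by norm_num) (by norm_num)).continuousAt.tendsto
    rw [H0] at this
    exact this.mono_left nhdsWithin_le_nhds
  · have h1 : Tendsto (fun t : ℝ => sin (π * t / 2) / t) (𝓝[>] 0) (𝓝 (π / 2)) := by
      have := (hasw 0).sin.tendsto_slope_zero_right
      simp only [zero_add, mul_zero, zero_div, sin_zero, sub_zero, cos_zero, one_mul, smul_eq_mul] at this
      refine this.congr fun t => ?_
      exact (div_eq_inv_mul _ _).symm
    have h2 : Tendsto (fun t : ℝ => 8 / π * cos (π * t / 2) / (1 - t^4)) (𝓝[>] 0) (𝓝 (8 / π)) := by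
      have : ContinuousAt (fun t : ℝ => 8 / π * cos (π * t / 2) / (1 - t^4)) 0 := by
        apply ContinuousAt.div <;> [fun_prop; fun_prop; norm_num]
      have := this.tendsto.mono_left (nhdsWithin_le_nhds (s := Ioi 0))
      simpa using this
    have h3 := h2.div h1 (by positivity)
    rw [show 8 / π / (π / 2) = 16 / π^2 by field_simp; norm_num] at h3
    refine h3.congr' ?_
    filter_upwards [Ioo_mem_nhdsGT (zero_lt_one (α := ℝ))] with t ht
    have ht4 : t^4 < 1 := pow_lt_one₀ ht.1.le ht.2 (by norm_num)
    have := spos ht.1 ht.2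
    have := cpos (by linarith [ht.1]) ht.2
    have : 1 - t^4 ≠ 0 := by linarith
    have := ht.1
    simp only [F', H', Pi.div_apply]
    field_simp
    try norm_num

lemma lim1 : Tendsto (fun t => F t / H t) (𝓝[<] 1) (𝓝 1) := by
  have hpi := Real.pi_pos
  have hs : Tendsto (fun t : ℝ => 1 - t) (𝓝[<] 1) (𝓝[>] 0) := by
    apply tendsto_nhdsWithin_of_tendsto_nhds_of_eventually_within
    · have : ContinuousAt (fun t : ℝ => 1 - t) 1 := by fun_prop
      have := this.tendsto.mono_left (nhdsWithin_le_nhds (s := Iio 1))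
      simpa using this
    · filter_upwards [self_mem_nhdsWithin] with t ht
      have : t < 1 := ht
      simp [this]
  have hL : Tendsto (fun t : ℝ => (Real.log (1 - t))⁻¹) (𝓝[<] 1) (𝓝 0) :=
    (tendsto_log_nhdsGT_zero.comp hs).inv_tendsto_atBot
  have hA : Tendsto (fun t : ℝ => Real.log ((1 + t^2) / (1 + t))) (𝓝[<] 1) (𝓝 0) := by
    have : ContinuousAt (fun t : ℝ => Real.log ((1 + t^2) / (1 + t))) 1 := by
      apply ContinuousAt.log
      · apply ContinuousAt.div <;> [fun_prop; fun_prop; norm_num]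
      · norm_num
    have := this.tendsto.mono_left (nhdsWithin_le_nhds (s := Iio 1))
    norm_num at this
    exact this
  have hB : Tendsto (fun t : ℝ => Real.log (cos (π * t / 2) / (1 - t))) (𝓝[<] 1) (𝓝 (Real.log (π/2))) := by
    have h1 : Tendsto (fun t : ℝ => sin (π * t / 2) / t) (𝓝[>] 0) (𝓝 (π / 2)) := by
      have := (hasw 0).sin.tendsto_slope_zero_right
      simp only [zero_add, mul_zero, zero_div, sin_zero, sub_zero, cos_zero, one_mul, smul_eq_mul] at this
      refine this.congr fun t => ?_
      exact (div_eq_inv_mul _ _).symm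
    have := (h1.comp hs).log (by positivity)
    refine this.congr fun t => ?_
    simp only [Function.comp]
    rw [← sin_pi_div_two_sub]
    ring_nf
  have h := (((hA.mul hL).const_sub 1).div ((hB.mul hL).const_add 1) (by simp))
  simp only [zero_mul, mul_zero, sub_zero, add_zero, div_one] at h
  refine h.congr' ?_
  filter_upwards [Ioo_mem_nhdsLT (zero_lt_one (α := ℝ))] with t ht
  have hc := cpos (by linarith [ht.1]) ht.2
  have h1 : 0 < 1 - t := by linarith [ht.2]
  have h2 : 0 < 1 + t := by linarith [ht.1]
  have h3 : 0 < 1 + t^2 := by positivity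
  have hl : Real.log (1 - t) < 0 := Real.log_neg h1 (by linarith [ht.1])
  have hH := Hpos ht.1 ht.2
  have eF : F t = Real.log ((1 + t^2) / (1 + t)) - Real.log (1 - t) := by
    rw [← Real.log_div (by positivity) h1.ne', F, div_div]
    congr 2; ring
  have eH : H t = - (Real.log (cos (π * t / 2) / (1 - t)) + Real.log (1 - t)) := by
    rw [← Real.log_mul (by positivity) h1.ne', H, div_mul_cancel₀ _ h1.ne']
    simp [Real.log_inv]
  rw [eH] at hH
  rw [eF, eH]
  simp only [Pi.div_apply]
  generalize Real.log (1 - t) = L at *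
  have hL0 : L ≠ 0 := hl.ne
  have e1 : ∀ x : ℝ, 1 - x * L⁻¹ = (L - x) / L := fun x => by field_simp
  have e2 : ∀ x : ℝ, 1 + x * L⁻¹ = (x + L) / L := fun x => by field_simp; ring
  rw [e1, e2, div_div_div_cancel_right₀ hL0, ← neg_div_neg_eq, neg_sub]

lemma g_image : (fun t => F t / H t) '' Ioo 0 1 = Ioo 1 (16 / π^2) := by
  have hanti := g_anti
  apply Subset.antisymm
  · rintro _ ⟨t, ht, rfl⟩
    constructor
    · obtain ⟨u, hu⟩ := exists_between ht.2
      have hu' : u ∈ Ioo (0:ℝ) 1 := ⟨ht.1.trans hu.1, hu.2⟩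
      refine lt_of_le_of_lt ?_ (hanti ht hu' hu.1)
      refine le_of_tendsto lim1 ?_
      filter_upwards [Ioo_mem_nhdsLT hu.2] with v hv
      exact (hanti hu' ⟨hu'.1.trans hv.1, hv.2⟩ hv.1).le
    · obtain ⟨u, hu⟩ := exists_between ht.1
      have hu' : u ∈ Ioo (0:ℝ) 1 := ⟨hu.1, hu.2.trans ht.2⟩
      refine lt_of_lt_of_le (hanti hu' ht hu.2) ?_
      refine ge_of_tendsto lim0 ?_
      filter_upwards [Ioo_mem_nhdsGT hu.1] with v hv
      exact (hanti ⟨hv.1, hv.2.trans hu'.2⟩ hu' hv.2).le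
  · apply isPreconnected_Ioo.intermediate_value_Ioo (l₁ := 𝓝[<] 1) (l₂ := 𝓝[>] 0) _ _ _ lim1 lim0
    · exact le_principal_iff.2 (Ioo_mem_nhdsLT zero_lt_one)
    · exact le_principal_iff.2 (Ioo_mem_nhdsGT zero_lt_one)
    · exact fun t ht => ((hasF (by linarith [ht.1]) ht.2).continuousAt.div
        (hasH (by linarith [ht.1]) ht.2).continuousAt (Hpos ht.1 ht.2).ne').continuousWithinAt

lemma conv {t : ℝ} (ht : t ∈ Ioo (0:ℝ) 1) (a : ℝ) :
    cos (π * t / 2) ^ a = Real.exp (-(a * H t)) ∧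
    (π^2 - (π * t)^2) / (π^2 + (π * t)^2) = Real.exp (- F t) := by
  have hc := cpos (by linarith [ht.1]) ht.2
  have h2 : 0 < 1 - t^2 := by nlinarith [ht.1, ht.2]
  have h3 : 0 < 1 + t^2 := by positivity
  have hpi := Real.pi_pos
  constructor
  · rw [Real.rpow_def_of_pos hc, H, one_div, Real.log_inv]
    congr 1; ring
  · rw [F, ← Real.log_inv, Real.exp_log (by positivity), inv_div]
    rw [show π^2 - (π*t)^2 = π^2 * (1 - t^2) by ring, show π^2 + (π*t)^2 = π^2 * (1 + t^2) by ring,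
      mul_div_mul_left _ _ (by positivity)]

lemma ltl {t : ℝ} (ht : t ∈ Ioo (0:ℝ) 1) (a : ℝ) :
    cos (π * t / 2) ^ a < (π^2 - (π * t)^2) / (π^2 + (π * t)^2) ↔ F t / H t < a := by
  rw [(conv ht a).1, (conv ht a).2, Real.exp_lt_exp, neg_lt_neg_iff, div_lt_iff₀ (Hpos ht.1 ht.2)]

lemma ltr {t : ℝ} (ht : t ∈ Ioo (0:ℝ) 1) (a : ℝ) :
    (π^2 - (π * t)^2) / (π^2 + (π * t)^2) < cos (π * t / 2) ^ a ↔ a < F t / H t := by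
  rw [(conv ht a).1, (conv ht a).2, Real.exp_lt_exp, neg_lt_neg_iff, lt_div_iff₀ (Hpos ht.1 ht.2)]

lemma one_lt : 1 < 16 / π^2 := by
  have h : (fun t => F t / H t) (1/2) ∈ Ioo 1 (16 / π^2) :=
    g_image ▸ mem_image_of_mem _ (by norm_num)
  exact h.1.trans h.2
end RH

theorem redheffer_cos_half_exponents :
    StrictAntiOn
      (fun t : ℝ => Real.log ((1 + t ^ 2) / (1 - t ^ 2)) / Real.log (1 / Real.cos (Real.pi * t / 2)))
      (Set.Ioo 0 1) ∧
    (fun t : ℝ => Real.log ((1 + t ^ 2) / (1 - t ^ 2)) / Real.log (1 / Real.cos (Real.pi * t / 2))) ''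
        Set.Ioo 0 1 = Set.Ioo 1 (16 / Real.pi ^ 2) ∧
    (∀ x : ℝ, 0 < x → x < Real.pi →
      Real.cos (x / 2) ^ (16 / Real.pi ^ 2) < (Real.pi ^ 2 - x ^ 2) / (Real.pi ^ 2 + x ^ 2) ∧
      (Real.pi ^ 2 - x ^ 2) / (Real.pi ^ 2 + x ^ 2) < Real.cos (x / 2) ^ (1 : ℝ)) ∧
    (∀ a : ℝ,
      (∀ x : ℝ, 0 < x → x < Real.pi →
        Real.cos (x / 2) ^ a < (Real.pi ^ 2 - x ^ 2) / (Real.pi ^ 2 + x ^ 2)) →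
      16 / Real.pi ^ 2 ≤ a) ∧
    (∀ b : ℝ,
      (∀ x : ℝ, 0 < x → x < Real.pi →
        (Real.pi ^ 2 - x ^ 2) / (Real.pi ^ 2 + x ^ 2) < Real.cos (x / 2) ^ b) →
      b ≤ 1) := by
  have hpi := Real.pi_pos
  have img := RH.g_image
  refine ⟨RH.g_anti, img, ?_, ?_, ?_⟩
  · intro x hx0 hx1
    obtain ⟨t, rfl⟩ : ∃ t, x = Real.pi * t := ⟨x / Real.pi, by field_simp⟩
    have ht : t ∈ Set.Ioo (0:ℝ) 1 := ⟨by nlinarith, by nlinarith⟩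
    rw [RH.ltl ht, RH.ltr ht]
    have h : (fun t => RH.F t / RH.H t) t ∈ Set.Ioo 1 (16 / Real.pi ^ 2) :=
      img ▸ Set.mem_image_of_mem _ ht
    exact ⟨h.2, h.1⟩
  · intro a ha
    by_contra! hlt
    obtain ⟨y, hy1, hy2⟩ := exists_between (max_lt hlt RH.one_lt)
    have hy : y ∈ Set.Ioo 1 (16 / Real.pi ^ 2) := ⟨(le_max_right _ _).trans_lt hy1, hy2⟩
    rw [← img] at hy
    obtain ⟨t, ht, rfl⟩ := hy
    have h := (RH.ltl ht a).1 (ha (Real.pi * t) (mul_pos hpi ht.1) (by nlinarith [ht.2]))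
    exact lt_asymm h ((le_max_left _ _).trans_lt hy1)
  · intro b hb
    by_contra! hlt
    obtain ⟨y, hy1, hy2⟩ := exists_between (lt_min hlt RH.one_lt)
    have hy : y ∈ Set.Ioo 1 (16 / Real.pi ^ 2) := ⟨hy1, hy2.trans_le (min_le_right _ _)⟩
    rw [← img] at hy
    obtain ⟨t, ht, rfl⟩ := hy
    have h := (RH.ltr ht b).1 (hb (Real.pi * t) (mul_pos hpi ht.1) (by nlinarith [ht.2]))
    exact lt_asymm h (hy2.trans_le (min_le_left _ _))
end

section
/- The function h(t) = (1 − 4t²)/(t²·cos(πt)) − 1/t² is strictly increasing on the interval (0, 1/2), with range ((π² − 8)/2, 16/π − 4). In particular, for all real x with 0 < x < π/2, one has (π² − 4x²)/(π² + α·x²) < cos x < (π² − 4x²)/(π² + β·x²), where α = 16/π − 4 and β = (π² − 8)/2 are best possible. -/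
namespace Redh
open Real Filter Topology

/-- slope-monotone functions of `u` on `[0,1/4)` -/
def P (g : ℝ → ℝ) : Prop :=
  ∀ u v : ℝ, 0 < u → u < v → v < 1 / 4 → 1 ≤ g u ∧ (g u - 1) / u ≤ (g v - 1) / v

lemma P.mono {g : ℝ → ℝ} (h : P g) {u v : ℝ} (hu : 0 < u) (huv : u < v) (hv : v < 1/4) :
    g u ≤ g v := by
  obtain ⟨h1, h2⟩ := h u v hu huv hv
  rw [div_le_div_iff₀ hu (hu.trans huv)] at h2
  nlinarith

lemma P.one : P (fun _ => 1) := by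
  intro u v hu huv hv
  simp

lemma P_mul_aux {g1 g2 : ℝ → ℝ} (h1 : P g1) (h2 : P g2) {u v : ℝ} (hu : 0 < u) (huv : u < v)
    (hv : v < 1/4) :
    (g1 u * g2 u - 1) / u - (g1 u - 1) / u ≤ (g1 v * g2 v - 1) / v - (g1 v - 1) / v := by
  have a := h1 u v hu huv hv
  have b := h2 u v hu huv hv
  have m := h1.mono hu huv hv
  have e : ∀ w : ℝ, (g1 w * g2 w - 1) / w - (g1 w - 1) / w = g1 w * ((g2 w - 1) / w) := by
    intro w; ring
  rw [e, e]
  have : 0 ≤ (g2 u - 1) / u := div_nonneg (by linarith [b.1]) hu.le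
  exact mul_le_mul m b.2 this (by linarith [a.1])

lemma P.mul {g1 g2 : ℝ → ℝ} (h1 : P g1) (h2 : P g2) : P (fun u => g1 u * g2 u) := by
  intro u v hu huv hv
  have a := h1 u v hu huv hv
  have b := h2 u v hu huv hv
  have := P_mul_aux h1 h2 hu huv hv
  refine ⟨by nlinarith [a.1, b.1], ?_⟩
  show (g1 u * g2 u - 1) / u ≤ (g1 v * g2 v - 1) / v
  linarith [a.2]

lemma basic_eq {a u : ℝ} (hu : u ≠ 0) (h : 1 - a * u ≠ 0) :
    ((1 - a * u)⁻¹ - 1) / u = a * (1 - a * u)⁻¹ := by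
  field_simp
  ring

lemma basic_lt {a u v : ℝ} (ha : 0 < a) (ha1 : a ≤ 4) (hu : 0 < u) (huv : u < v) (hv : v < 1/4) :
    ((1 - a * u)⁻¹ - 1) / u < ((1 - a * v)⁻¹ - 1) / v := by
  have p1 : 0 < 1 - a * v := by nlinarith
  have p2 : 1 - a * v < 1 - a * u := by nlinarith
  rw [basic_eq hu.ne' (by linarith), basic_eq (hu.trans huv).ne' (by linarith)]
  have := inv_strictAnti₀ p1 p2
  nlinarith

lemma P_basic {a : ℝ} (ha : 0 < a) (ha1 : a ≤ 4) : P (fun u => (1 - a * u)⁻¹) := by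
  intro u v hu huv hv
  refine ⟨?_, (basic_lt ha ha1 hu huv hv).le⟩
  have p1 : 0 < 1 - a * u := by nlinarith
  exact (one_le_inv₀ p1).2 (by nlinarith)

lemma P_prod (a : ℕ → ℝ) (ha : ∀ n, 0 < a n) (ha1 : ∀ n, a n ≤ 4) (n : ℕ) :
    P (fun u => ∏ j ∈ Finset.range n, (1 - a j * u)⁻¹) := by
  induction n with
  | zero => simpa using P.one
  | succ n ih =>
    simp only [Finset.prod_range_succ]
    exact ih.mul (P_basic (ha n) (ha1 n))

lemma P_lim {F : ℕ → ℝ → ℝ} {G : ℝ → ℝ} (hF : ∀ n, P (F n))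
    (hl : ∀ u, 0 < u → u < 1/4 → Tendsto (fun n => F n u) atTop (𝓝 (G u))) : P G := by
  intro u v hu huv hv
  have l1 := hl u hu (huv.trans hv)
  have l2 := hl v (hu.trans huv) hv
  exact ⟨ge_of_tendsto' l1 (fun n => (hF n u v hu huv hv).1),
    le_of_tendsto_of_tendsto' ((l1.sub_const 1).div_const u) ((l2.sub_const 1).div_const v)
      (fun n => (hF n u v hu huv hv).2)⟩

lemma prod_split (t : ℝ) (n : ℕ) :
    ∏ j ∈ Finset.range (2 * n), (1 - (2 * t) ^ 2 / ((j : ℝ) + 1) ^ 2) =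
    (∏ j ∈ Finset.range n, (1 - 4 / (2 * (j : ℝ) + 1) ^ 2 * t ^ 2)) *
    ∏ j ∈ Finset.range n, (1 - t ^ 2 / ((j : ℝ) + 1) ^ 2) := by
  induction n with
  | zero => simp
  | succ n ih =>
    rw [show 2 * (n + 1) = 2 * n + 1 + 1 by ring, Finset.prod_range_succ, Finset.prod_range_succ, ih,
      Finset.prod_range_succ, Finset.prod_range_succ]
    have e1 : (1 - (2 * t) ^ 2 / (((2 * n : ℕ) : ℝ) + 1) ^ 2) = 1 - 4 / (2 * (n : ℝ) + 1) ^ 2 * t ^ 2 := by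
      push_cast; ring
    have e2 : (1 - (2 * t) ^ 2 / (((2 * n + 1 : ℕ) : ℝ) + 1) ^ 2) = 1 - t ^ 2 / ((n : ℝ) + 1) ^ 2 := by
      have : (n : ℝ) + 1 ≠ 0 := by positivity
      have h2 : (((2 * n + 1 : ℕ) : ℝ) + 1) = 2 * ((n : ℝ) + 1) := by push_cast; ring
      rw [h2]
      field_simp
      
    rw [e1, e2]; ring

lemma cos_prod {t : ℝ} (h0 : 0 < t) (h1 : t < 1 / 2) :
    Tendsto (fun n : ℕ => ∏ j ∈ Finset.range n, (1 - 4 / (2 * (j : ℝ) + 1) ^ 2 * t ^ 2)) atTop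
      (𝓝 (cos (π * t))) := by
  have A := Real.tendsto_euler_sin_prod (2 * t)
  have B := Real.tendsto_euler_sin_prod t
  have hs : 0 < sin (π * t) := sin_pos_of_pos_of_lt_pi (by positivity) (by nlinarith [pi_pos])
  have A' := A.comp (tendsto_id.const_mul_atTop' (show 0 < 2 by norm_num))
  have C := (A'.div B hs.ne').div_const 2
  have e : sin (π * (2 * t)) / sin (π * t) / 2 = cos (π * t) := by
    rw [show π * (2 * t) = 2 * (π * t) by ring, sin_two_mul]
    field_simp
  rw [e] at C
  refine C.congr fun n => ?_
  have hp : 0 < ∏ j ∈ Finset.range n, (1 - t ^ 2 / ((j : ℝ) + 1) ^ 2) := by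
    refine Finset.prod_pos fun j _ => ?_
    have : (1 : ℝ) ≤ ((j : ℝ) + 1) ^ 2 := by nlinarith [(Nat.cast_nonneg j : (0:ℝ) ≤ j)]
    rw [sub_pos, div_lt_one (by positivity)]
    nlinarith
  simp only [Pi.div_apply, Function.comp_apply, id]
  rw [prod_split]
  have := pi_pos.ne'
  have := h0.ne'
  have hp' := hp.ne'
  generalize (∏ j ∈ Finset.range n, (1 - t ^ 2 / ((j : ℝ) + 1) ^ 2)) = Q at hp' ⊢
  generalize (∏ j ∈ Finset.range n, (1 - 4 / (2 * (j : ℝ) + 1) ^ 2 * t ^ 2)) = R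
  field_simp

/-- The function `h`. -/
noncomputable def h (t : ℝ) : ℝ := (1 - 4 * t ^ 2) / (t ^ 2 * Real.cos (Real.pi * t)) - 1 / t ^ 2

lemma cpos {t : ℝ} (h0 : 0 < t) (h1 : t < 1 / 2) : 0 < cos (π * t) :=
  cos_pos_of_mem_Ioo ⟨by nlinarith [pi_pos], by nlinarith [pi_pos]⟩

lemma G_P : P (fun u => (1 - 4 * u) * (1 - 4 / 9 * u) / cos (π * √u)) := by
  refine P_lim (fun n => P_prod (fun j => 4 / (2 * ((j + 2 : ℕ) : ℝ) + 1) ^ 2)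
    (fun j => by positivity) (fun j => ?_) n) ?_
  · rw [div_le_iff₀ (by positivity)]
    push_cast
    nlinarith [(Nat.cast_nonneg j : (0:ℝ) ≤ j)]
  · intro u hu hu1
    have s0 : 0 < √u := sqrt_pos.2 hu
    have s1 : √u < 1 / 2 := by
      rw [sqrt_lt' (by norm_num)]; norm_num; linarith
    have L := cos_prod s0 s1
    rw [sq_sqrt hu.le] at L
    have L2 := (L.comp (tendsto_add_atTop_nat 2)).inv₀ (cpos s0 s1).ne'
    have L3 := L2.const_mul ((1 - 4 * u) * (1 - 4 / 9 * u))
    rw [← div_eq_mul_inv] at L3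
    refine L3.congr fun n => ?_
    simp only [Function.comp_apply]
    rw [Finset.prod_range_succ', Finset.prod_range_succ', Finset.prod_inv_distrib]
    have e1 : (1 - 4 * u) ≠ 0 := by linarith
    have e2 : (1 - 4 / 9 * u) ≠ 0 := by linarith
    norm_num
    have e3 : ∀ x : ℝ, (1 - 4 * u) * (1 - 4 / 9 * u) * ((1 - 4 * u)⁻¹ * ((1 - 4 / 9 * u)⁻¹ * x)) = x := by
      intro x
      generalize 1 - 4 / 9 * u = q at e2 ⊢
      field_simp
    rw [e3]
    simp only [add_assoc]; norm_num

lemma h_strict : StrictMonoOn h (Set.Ioo 0 (1 / 2)) := by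
  intro s hs t ht hst
  have k : ∀ w ∈ Set.Ioo (0:ℝ) (1/2), h w =
      ((1 - 4/9 * w^2)⁻¹ * ((1 - 4 * w^2) * (1 - 4 / 9 * w^2) / cos (π * √(w^2))) - 1) / w^2 := by
    intro w hw
    rw [sqrt_sq hw.1.le, h]
    have := (cpos hw.1 hw.2).ne'
    have := hw.1.ne'
    have hq : 1 - 4/9 * w^2 ≠ 0 := by nlinarith [hw.1, hw.2]
    rw [show (1 - 4/9 * w^2)⁻¹ * ((1 - 4 * w^2) * (1 - 4 / 9 * w^2) / cos (π * w))
      = (1 - 4 * w^2) / cos (π * w) by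
        generalize 1 - 4 / 9 * w^2 = q at hq ⊢
        field_simp]
    field_simp
  rw [k s hs, k t ht]
  have u0 : 0 < s^2 := by have := hs.1; positivity
  have uv : s^2 < t^2 := by nlinarith [hs.1]
  have v1 : t^2 < 1/4 := by nlinarith [ht.1, ht.2]
  have A := P_mul_aux (P_basic (a := 4/9) (by norm_num) (by norm_num)) G_P u0 uv v1
  have B := basic_lt (a := 4/9) (by norm_num) (by norm_num) u0 uv v1
  linarith

lemma h_cont : ContinuousOn h (Set.Ioo 0 (1 / 2)) := by
  intro t ht
  have := (cpos ht.1 ht.2).ne'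
  have := ht.1.ne'
  unfold h
  refine ContinuousAt.continuousWithinAt ?_
  refine ContinuousAt.sub (ContinuousAt.div (by fun_prop) (by fun_prop) (by positivity))
    (ContinuousAt.div (by fun_prop) (by fun_prop) (by positivity))

lemma mem0 : Set.Ioo (0:ℝ) (1/2) ∈ 𝓝[>] (0:ℝ) := Ioo_mem_nhdsGT (by norm_num)
lemma mem1 : Set.Ioo (0:ℝ) (1/2) ∈ 𝓝[<] (1/2:ℝ) := Ioo_mem_nhdsLT (by norm_num)

lemma h_lim0 : Tendsto h (𝓝[>] 0) (𝓝 ((π ^ 2 - 8) / 2)) := by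
  have d : HasDerivAt (fun t : ℝ => sin (π / 2 * t)) (cos (π / 2 * 0) * (π / 2 * 1)) 0 :=
    ((hasDerivAt_id (0:ℝ)).const_mul (π/2)).sin
  have s := (hasDerivAt_iff_tendsto_slope.1 d).mono_left (nhdsGT_le_nhdsNE 0)
  have c : Tendsto (fun t : ℝ => cos (π * t)) (𝓝[>] 0) (𝓝 (cos (π * 0))) :=
    (Continuous.tendsto (by fun_prop) 0).mono_left nhdsWithin_le_nhds
  have L := (((s.pow 2).const_mul 2).sub_const 4).div c (by simp)
  have e : (2 * (cos (π / 2 * 0) * (π / 2 * 1)) ^ 2 - 4) / cos (π * 0) = (π ^ 2 - 8) / 2 := by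
    simp; ring
  rw [e] at L
  refine L.congr' ?_
  filter_upwards [mem0] with t ht
  have := (cpos ht.1 ht.2).ne'
  have := ht.1.ne'
  simp only [slope_def_field, Pi.div_apply, h]
  have q : cos (π * t) = 1 - 2 * sin (π / 2 * t) ^ 2 := by
    rw [show π * t = 2 * (π / 2 * t) by ring, cos_two_mul, cos_sq']; ring
  simp only [mul_zero, sin_zero, sub_zero]
  have q' : sin (π / 2 * t) ^ 2 = (1 - cos (π * t)) / 2 := by rw [q]; ring
  rw [div_pow, q']
  field_simp
  ring

lemma h_lim1 : Tendsto h (𝓝[<] (1/2)) (𝓝 (16 / π - 4)) := by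
  have d : HasDerivAt (fun t : ℝ => cos (π * t)) (-sin (π * (1/2)) * (π * 1)) (1/2) :=
    ((hasDerivAt_id (1/2:ℝ)).const_mul π).cos
  have s := (hasDerivAt_iff_tendsto_slope.1 d).mono_left (nhdsLT_le_nhdsNE (1/2))
  have hh : sin (π * (1/2)) = 1 := by rw [mul_one_div]; exact sin_pi_div_two
  have hc : cos (π * (1/2)) = 0 := by rw [mul_one_div]; exact cos_pi_div_two
  rw [hh] at s
  have c : Tendsto (fun t : ℝ => -2 * (1 + 2 * t) / t^2) (𝓝[<] (1/2)) (𝓝 (-2 * (1 + 2 * (1/2)) / (1/2)^2)) :=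
    (ContinuousAt.div (by fun_prop) (by fun_prop) (by norm_num) :
      ContinuousAt (fun t : ℝ => -2 * (1 + 2 * t) / t^2) (1/2)).tendsto.mono_left nhdsWithin_le_nhds
  have c2 : Tendsto (fun t : ℝ => 1 / t^2) (𝓝[<] (1/2)) (𝓝 (1 / (1/2)^2)) :=
    (ContinuousAt.div (by fun_prop) (by fun_prop) (by norm_num) :
      ContinuousAt (fun t : ℝ => 1 / t^2) (1/2)).tendsto.mono_left nhdsWithin_le_nhds
  have L := (c.div s (by simp [pi_ne_zero])).sub c2
  have e : -2 * (1 + 2 * (1/2)) / (1/2)^2 / (-1 * (π * 1)) - 1 / (1/2)^2 = 16 / π - 4 := by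
    have := pi_ne_zero
    field_simp; ring
  rw [e] at L
  refine L.congr' ?_
  filter_upwards [mem1] with t ht
  have := (cpos ht.1 ht.2).ne'
  have := ht.1.ne'
  have : t - 1/2 ≠ 0 := by linarith [ht.2]
  simp only [slope_def_field, Pi.div_apply, h, hc, sub_zero]
  congr 1
  rw [div_div_eq_mul_div, div_mul_eq_mul_div, div_div]
  congr 1
  ring

lemma h_gt {t : ℝ} (ht : t ∈ Set.Ioo (0:ℝ) (1/2)) : (π ^ 2 - 8) / 2 < h t := by
  have m : t / 2 ∈ Set.Ioo (0:ℝ) (1/2) := ⟨by linarith [ht.1], by linarith [ht.1, ht.2]⟩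
  refine lt_of_le_of_lt ?_ (h_strict m ht (by linarith [ht.1]))
  refine le_of_tendsto h_lim0 ?_
  filter_upwards [Ioo_mem_nhdsGT m.1] with s hs
  exact (h_strict ⟨hs.1, hs.2.trans m.2⟩ m hs.2).le

lemma h_lt {t : ℝ} (ht : t ∈ Set.Ioo (0:ℝ) (1/2)) : h t < 16 / π - 4 := by
  have m : (t + 1/2) / 2 ∈ Set.Ioo (0:ℝ) (1/2) := ⟨by linarith [ht.1], by linarith [ht.1, ht.2]⟩
  refine lt_of_lt_of_le (h_strict ht m (by linarith [ht.2])) ?_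
  refine ge_of_tendsto h_lim1 ?_
  filter_upwards [Ioo_mem_nhdsLT m.2] with s hs
  exact (h_strict m ⟨m.1.trans hs.1, hs.2⟩ hs.1).le

lemma h_image : h '' Set.Ioo 0 (1/2) = Set.Ioo ((π ^ 2 - 8) / 2) (16 / π - 4) := by
  apply Set.Subset.antisymm
  · rintro _ ⟨t, ht, rfl⟩
    exact ⟨h_gt ht, h_lt ht⟩
  · exact isPreconnected_Ioo.intermediate_value_Ioo (le_principal_iff.2 mem0)
      (le_principal_iff.2 mem1) h_cont h_lim0 h_lim1

lemma h_eq {t : ℝ} (ht : t ∈ Set.Ioo (0:ℝ) (1/2)) :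
    1 - 4 * t ^ 2 = (1 + h t * t ^ 2) * cos (π * t) := by
  have := (cpos ht.1 ht.2).ne'
  have := ht.1.ne'
  unfold h
  generalize cos (π * t) = c at *
  field_simp
  ring

lemma quot (a t : ℝ) : (π ^ 2 - 4 * (π * t) ^ 2) / (π ^ 2 + a * (π * t) ^ 2) =
    (1 - 4 * t ^ 2) / (1 + a * t ^ 2) := by
  rw [show π ^ 2 - 4 * (π * t) ^ 2 = π ^ 2 * (1 - 4 * t ^ 2) by ring,
    show π ^ 2 + a * (π * t) ^ 2 = π ^ 2 * (1 + a * t ^ 2) by ring,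
    mul_div_mul_left _ _ (by positivity)]

lemma lt_iff {a t : ℝ} (ht : t ∈ Set.Ioo (0:ℝ) (1/2)) (ha : 0 < 1 + a * t ^ 2) :
    (π ^ 2 - 4 * (π * t) ^ 2) / (π ^ 2 + a * (π * t) ^ 2) < cos (π * t) ↔ h t < a := by
  have c := cpos ht.1 ht.2
  have t2 : 0 < t ^ 2 := by have := ht.1; positivity
  rw [quot, div_lt_iff₀ ha, h_eq ht, mul_comm, mul_lt_mul_iff_right₀ c, add_lt_add_iff_left,
    mul_lt_mul_iff_left₀ t2]

lemma gt_iff {a t : ℝ} (ht : t ∈ Set.Ioo (0:ℝ) (1/2)) (ha : 0 < 1 + a * t ^ 2) :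
    cos (π * t) < (π ^ 2 - 4 * (π * t) ^ 2) / (π ^ 2 + a * (π * t) ^ 2) ↔ a < h t := by
  have c := cpos ht.1 ht.2
  have t2 : 0 < t ^ 2 := by have := ht.1; positivity
  rw [quot, lt_div_iff₀ ha, h_eq ht, mul_comm, mul_lt_mul_iff_left₀ c, add_lt_add_iff_left,
    mul_lt_mul_iff_left₀ t2]

lemma beta_pos : 0 < (π ^ 2 - 8) / 2 := by nlinarith [pi_gt_three]

lemma pit {t : ℝ} (ht : t ∈ Set.Ioo (0:ℝ) (1/2)) : 0 < π * t ∧ π * t < π / 2 :=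
  ⟨mul_pos pi_pos ht.1, by nlinarith [pi_pos, ht.2]⟩

end Redh

open Redh in
theorem redheffer_cos_refinement :
    StrictMonoOn
      (fun t : ℝ => (1 - 4 * t ^ 2) / (t ^ 2 * Real.cos (Real.pi * t)) - 1 / t ^ 2)
      (Set.Ioo 0 (1 / 2)) ∧
    (fun t : ℝ => (1 - 4 * t ^ 2) / (t ^ 2 * Real.cos (Real.pi * t)) - 1 / t ^ 2) ''
        Set.Ioo 0 (1 / 2) = Set.Ioo ((Real.pi ^ 2 - 8) / 2) (16 / Real.pi - 4) ∧
    (∀ x : ℝ, 0 < x → x < Real.pi / 2 →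
      (Real.pi ^ 2 - 4 * x ^ 2) / (Real.pi ^ 2 + (16 / Real.pi - 4) * x ^ 2) < Real.cos x ∧
      Real.cos x < (Real.pi ^ 2 - 4 * x ^ 2) / (Real.pi ^ 2 + ((Real.pi ^ 2 - 8) / 2) * x ^ 2)) ∧
    (∀ a : ℝ,
      (∀ x : ℝ, 0 < x → x < Real.pi / 2 →
        (Real.pi ^ 2 - 4 * x ^ 2) / (Real.pi ^ 2 + a * x ^ 2) < Real.cos x) →
      16 / Real.pi - 4 ≤ a) ∧
    (∀ b : ℝ,
      (∀ x : ℝ, 0 < x → x < Real.pi / 2 →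
        Real.cos x < (Real.pi ^ 2 - 4 * x ^ 2) / (Real.pi ^ 2 + b * x ^ 2)) →
      b ≤ (Real.pi ^ 2 - 8) / 2) := by
  refine ⟨h_strict, h_image, ?_, ?_, ?_⟩
  · intro x hx hx1
    obtain ⟨t, rfl⟩ : ∃ t, x = Real.pi * t := ⟨x / Real.pi, by field_simp [Real.pi_ne_zero]⟩
    have ht : t ∈ Set.Ioo (0:ℝ) (1/2) :=
      ⟨pos_of_mul_pos_right hx Real.pi_pos.le, by nlinarith [Real.pi_pos]⟩
    have g := h_gt ht
    have l := h_lt ht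
    have b := beta_pos
    have t2 : 0 < t ^ 2 := by have := ht.1; positivity
    exact ⟨(lt_iff ht (by nlinarith)).2 l, (gt_iff ht (by nlinarith)).2 g⟩
  · intro a H
    rcases le_or_gt a (-4) with h4 | h4
    · exfalso
      have ht : 1 / (2 - a) ∈ Set.Ioo (0:ℝ) (1/2) :=
        ⟨by apply one_div_pos.2; linarith, by apply one_div_lt_one_div_of_lt <;> linarith⟩
      have k : 0 < 1 + a * (1 / (2 - a)) ^ 2 := by
        have : 0 < 2 - a := by linarith
        rw [show 1 + a * (1 / (2 - a)) ^ 2 = ((2 - a) ^ 2 + a) / (2 - a) ^ 2 by field_simp]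
        apply div_pos <;> nlinarith
      have := (lt_iff ht k).1 (H _ (pit ht).1 (pit ht).2)
      linarith [h_gt ht, beta_pos]
    · refine le_of_tendsto h_lim1 ?_
      filter_upwards [mem1] with t ht
      have k : 0 < 1 + a * t ^ 2 := by
        have t2 : 0 < t ^ 2 := by have := ht.1; positivity
        have : t ^ 2 < 1 / 4 := by nlinarith [ht.1, ht.2]
        nlinarith
      exact ((lt_iff ht k).1 (H _ (pit ht).1 (pit ht).2)).le
  · intro b H
    refine ge_of_tendsto h_lim0 ?_
    filter_upwards [mem0] with t ht
    have hx := H _ (pit ht).1 (pit ht).2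
    have k : 0 < 1 + b * t ^ 2 := by
      by_contra hk
      rw [quot] at hx
      have := div_nonpos_of_nonneg_of_nonpos
        (show 0 ≤ 1 - 4 * t ^ 2 by nlinarith [ht.1, ht.2]) (not_lt.1 hk)
      linarith [cpos ht.1 ht.2]
    exact ((gt_iff ht k).1 hx).le
end

section
/- For all real a with 0 < a < 1 and all real x > 0, the digamma function satisfies (1 − a)/(x + a) < ψ(1 + x) − ψ(x + a). -/
/-- The digamma function ψ(x) = Γ'(x)/Γ(x). -/
noncomputable def digamma (x : ℝ) : ℝ := deriv Real.Gamma x / Real.Gamma x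

theorem diffGamma_pos {y : ℝ} (hy : 0 < y) : DifferentiableAt ℝ Real.Gamma y :=
  Real.differentiableAt_Gamma (fun m => by
    have : (0:ℝ) ≤ m := Nat.cast_nonneg m
    linarith)

theorem digamma_rec {y : ℝ} (hy : 0 < y) : digamma (y + 1) = digamma y + 1 / y := by
  have hG := Real.Gamma_pos_of_pos hy
  have h1 : HasDerivAt (fun t => Real.Gamma (t + 1)) (deriv Real.Gamma (y + 1)) y :=
    (diffGamma_pos (by linarith : 0 < y + 1)).hasDerivAt.comp_add_const y 1
  have h2 : HasDerivAt (fun t => t * Real.Gamma t) (1 * Real.Gamma y + y * deriv Real.Gamma y) y :=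
    (hasDerivAt_id y).mul (diffGamma_pos hy).hasDerivAt
  have h3 : (fun t => Real.Gamma (t + 1)) =ᶠ[nhds y] (fun t => t * Real.Gamma t) := by
    filter_upwards [lt_mem_nhds hy] with t ht
    exact Real.Gamma_add_one ht.ne'
  have h4 := h1.unique (h2.congr_of_eventuallyEq h3)
  unfold digamma
  rw [h4, Real.Gamma_add_one hy.ne']
  field_simp
  ring

theorem digamma_mono {y z : ℝ} (hy : 0 < y) (hyz : y ≤ z) : digamma y ≤ digamma z := by
  have key : ∀ t : ℝ, 0 < t → HasDerivAt (Real.log ∘ Real.Gamma) (digamma t) t := fun t ht =>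
    (diffGamma_pos ht).hasDerivAt.log (Real.Gamma_pos_of_pos ht).ne'
  have hz : 0 < z := by linarith
  have h := Real.convexOn_log_Gamma.monotoneOn_deriv
    (fun t ht => (key t ht).differentiableAt) (Set.mem_Ioi.2 hy) (Set.mem_Ioi.2 hz) hyz
  rwa [(key y hy).deriv, (key z hz).deriv] at h

theorem digamma_step {y h : ℝ} (hy : 0 < y) (h0 : 0 < h) (h1 : h < 1) :
    digamma (y + 1 + h) - digamma (y + 1) - h / (y + 1) < digamma (y + h) - digamma y - h / y := by
  have e : y + 1 + h = (y + h) + 1 := by ring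
  rw [e, digamma_rec (by linarith : 0 < y + h), digamma_rec hy]
  have e1 : 1 / y - 1 / (y + h) - h / y + h / (y + 1)
      = h * (1 - h) / (y * (y + h) * (y + 1)) := by
    have : y + h ≠ 0 := by linarith
    field_simp
    ring
  have e2 : 0 < h * (1 - h) / (y * (y + h) * (y + 1)) := by
    have : 0 < 1 - h := by linarith
    positivity
  linarith

theorem digamma_nonneg_aux {y h : ℝ} (hy : 0 < y) (h0 : 0 < h) (h1 : h < 1) :
    0 ≤ digamma (y + h) - digamma y - h / y := by
  have hn : ∀ n : ℕ, -(h / (y + n)) ≤ digamma (y + h) - digamma y - h / y := by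
    intro n
    have hs : digamma (y + n + h) - digamma (y + n) - h / (y + n)
        ≤ digamma (y + h) - digamma y - h / y := by
      induction n with
      | zero => simp
      | succ k ih =>
        have hk : 0 < y + k := by positivity
        have := digamma_step hk h0 h1
        push_cast
        rw [← add_assoc]
        linarith
    have := digamma_mono (by positivity : 0 < y + n) (by linarith : y + n ≤ y + n + h)
    linarith
  have ht : Filter.Tendsto (fun n : ℕ => -(h / (y + n))) Filter.atTop (nhds 0) := by
    have := (Filter.Tendsto.const_div_atTop
      (Filter.tendsto_atTop_add_const_left Filter.atTop y tendsto_natCast_atTop_atTop) h).neg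
    simpa using this
  exact le_of_tendsto' ht hn

theorem digamma_difference_lower_bound (a x : ℝ) (ha0 : 0 < a) (ha1 : a < 1) (hx : 0 < x) :
    (1 - a) / (x + a) < digamma (1 + x) - digamma (x + a) := by
  have hy : 0 < x + a := by linarith
  have h1 := digamma_step hy (by linarith : 0 < 1 - a) (by linarith)
  have h2 := digamma_nonneg_aux (by linarith : 0 < x + a + 1) (by linarith : 0 < 1 - a) (by linarith)
  have e : x + a + (1 - a) = 1 + x := by ring
  rw [e] at h1
  linarith
end

section
/- For all real x > 1 and all real y with 0 < y < 1, the gamma function satisfies Γ(1 + x)·Γ(1 + y)/Γ(1 + x + y) > 1/(1 + x·y). -/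
lemma grl_sum3 (s : ℝ) (hs : 0 < s) (N : ℕ) :
    ∑ m ∈ Finset.range N, 2 / ((m:ℝ) + 1 + s) ^ 3 ≤ 1 / (s * (s + 1)) - 1 / ((s + N) * (s + N + 1)) := by
  induction N with
  | zero => simp
  | succ N ih =>
    rw [Finset.sum_range_succ]
    have hN : (0:ℝ) ≤ N := Nat.cast_nonneg N
    have h : 2 / ((N:ℝ) + 1 + s) ^ 3 ≤ 1 / ((s + N) * (s + N + 1)) - 1 / ((s + (N+1:ℕ)) * (s + (N+1:ℕ) + 1)) := by
      push_cast
      obtain ⟨a, ha⟩ : ∃ a, a = s + (N:ℝ) := ⟨_, rfl⟩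
      have ha0 : 0 < a := by rw [ha]; linarith
      have e1 : (N:ℝ) + 1 + s = a + 1 := by rw [ha]; ring
      have e2 : s + ((N:ℝ) + 1) = a + 1 := by rw [ha]; ring
      rw [e1, e2, ← ha]
      have : 1 / (a * (a + 1)) - 1 / ((a + 1) * (a + 1 + 1)) = 2 / (a * (a+1) * (a+2)) := by
        field_simp
        ring
      rw [this]
      apply div_le_div_of_nonneg_left (by norm_num) (by positivity)
      nlinarith
    linarith

lemma grl_deriv (x y : ℝ) (hx : 1 ≤ x) (hy0 : 0 ≤ y) (hy1 : y ≤ 1) (N : ℕ) :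
    ∑ m ∈ Finset.range N, 2 / ((m:ℝ) + 1 + (x + y)) ^ 3 + 1 / (x + 2) ^ 3 ≤ 2 * x / (1 + x * y) ^ 3 := by
  have h := grl_sum3 (x + y) (by linarith) N
  have h1 : 0 ≤ 1 / ((x + y + N) * (x + y + N + 1)) := by positivity
  have hq : 0 < 1 + x * y := by positivity
  have hqs : 1 + x * y ≤ x + y := by nlinarith
  have hq2 : 1 + x * y ≤ 2 * x := by nlinarith
  have h2 : 1 / (x + y) ^ 2 ≤ 2 * x / (1 + x * y) ^ 3 := by
    calc 1 / (x + y) ^ 2 ≤ 1 / (1 + x * y) ^ 2 := by gcongr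
      _ = (1 + x * y) / (1 + x * y) ^ 3 := by field_simp
      _ ≤ _ := by gcongr
  have hs : 0 < x + y := by linarith
  have h3 : 1 / (x + y) ^ 2 - 1 / ((x + y) * (x + y + 1)) = 1 / ((x + y) ^ 2 * (x + y + 1)) := by
    field_simp
    ring
  have h4 : 1 / (x + 2) ^ 3 ≤ 1 / ((x + y) ^ 2 * (x + y + 1)) := by
    apply one_div_le_one_div_of_le (by positivity)
    have hh : x + y ≤ x + 2 := by linarith
    have hh' : x + y + 1 ≤ x + 2 := by linarith
    calc (x + y) ^ 2 * (x + y + 1) ≤ (x + 2) ^ 2 * (x + 2) :=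
          mul_le_mul (pow_le_pow_left₀ hs.le hh 2) hh' (by positivity) (by positivity)
      _ = _ := by ring
  linarith

lemma grl_tele (y : ℝ) (hy0 : 0 ≤ y) (N : ℕ) :
    ∑ m ∈ Finset.range N, (1 / ((m:ℝ) + 1 + y) ^ 2 - 1 / ((m:ℝ) + 1 + (1 + y)) ^ 2)
      = 1 / (1 + y) ^ 2 - 1 / (N + 1 + y) ^ 2 := by
  induction N with
  | zero => simp
  | succ N ih =>
    rw [Finset.sum_range_succ, ih]
    push_cast
    ring

lemma grl_main (x y : ℝ) (hx : 1 ≤ x) (hy0 : 0 ≤ y) (hy1 : y ≤ 1) (N : ℕ) :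
    ∑ m ∈ Finset.range N, (1 / ((m:ℝ) + 1 + y) ^ 2 - 1 / ((m:ℝ) + 1 + (x + y)) ^ 2)
      + (1 / 2) * (1 / 9 - 1 / (x + 2) ^ 2) ≤ x ^ 2 / (1 + x * y) ^ 2 := by
  let f : ℝ → ℝ := fun x => x ^ 2 / (1 + x * y) ^ 2 -
    (∑ m ∈ Finset.range N, (1 / ((m:ℝ) + 1 + y) ^ 2 - 1 / ((m:ℝ) + 1 + (x + y)) ^ 2)
      + (1 / 2) * (1 / 9 - 1 / (x + 2) ^ 2))
  have hd : ∀ z : ℝ, 1 ≤ z → HasDerivAt f (2 * z / (1 + z * y) ^ 3 -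
      (∑ m ∈ Finset.range N, 2 / ((m:ℝ) + 1 + (z + y)) ^ 3 + 1 / (z + 2) ^ 3)) z := by
    intro z hz
    have hq : 1 + z * y ≠ 0 := by positivity
    have hi := hasDerivAt_id' z
    apply HasDerivAt.sub
    · refine HasDerivAt.congr_deriv ((hi.pow 2).div (((hi.mul_const y).const_add 1).pow 2) (by simpa using hq)) ?_
      simp
      field_simp
      ring
    · apply HasDerivAt.add
      · apply HasDerivAt.fun_sum
        intro m _
        have hm : (m:ℝ) + 1 + (z + y) ≠ 0 := by positivity
        refine HasDerivAt.congr_deriv (((hasDerivAt_const z (1:ℝ)).div (((hi.add_const y).const_add ((m:ℝ)+1)).pow 2) (by simpa using hm)).const_sub (1 / ((m:ℝ) + 1 + y) ^ 2)) ?_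
        simp
        field_simp
      · have hm : z + 2 ≠ 0 := by positivity
        refine HasDerivAt.congr_deriv ((((hasDerivAt_const z (1:ℝ)).div ((hi.add_const 2).pow 2) (by simpa using hm)).const_sub (1 / 9)).const_mul (1/2)) ?_
        simp
        field_simp
  have hmono : MonotoneOn f (Set.Ici 1) := by
    apply monotoneOn_of_deriv_nonneg (convex_Ici 1)
    · intro z hz
      exact (hd z hz).continuousAt.continuousWithinAt
    · intro z hz
      rw [interior_Ici] at hz
      exact (hd z (le_of_lt hz)).differentiableAt.differentiableWithinAt
    · intro z hz
      rw [interior_Ici] at hz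
      rw [(hd z (le_of_lt hz)).deriv]
      have := grl_deriv z y (le_of_lt hz) hy0 hy1 N
      linarith
  have h1 : f 1 ≤ f x := hmono (by simp) hx hx
  have h2 : 0 ≤ f 1 := by
    simp only [f]
    rw [grl_tele y hy0 N]
    have : 0 ≤ 1 / ((N:ℝ) + 1 + y) ^ 2 := by positivity
    norm_num at this ⊢
    linarith
  simp only [f] at h1 h2
  linarith

lemma grl_concave (x e : ℝ) (hx : 1 ≤ x) (he : e = (1 / 4) * (1 / 9 - 1 / (x + 2) ^ 2)) (N : ℕ) :
    ConcaveOn ℝ (Set.Icc 0 1) (fun y : ℝ => Real.log (1 + x * y) +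
      ∑ m ∈ Finset.range N, (Real.log ((m:ℝ) + 1 + (x + y)) - Real.log ((m:ℝ) + 1 + y)) + e * y ^ 2) := by
  have hd1 : ∀ y : ℝ, 0 ≤ y → HasDerivAt (fun y : ℝ => Real.log (1 + x * y) +
      ∑ m ∈ Finset.range N, (Real.log ((m:ℝ) + 1 + (x + y)) - Real.log ((m:ℝ) + 1 + y)) + e * y ^ 2)
      (x / (1 + x * y) + ∑ m ∈ Finset.range N, (1 / ((m:ℝ) + 1 + (x + y)) - 1 / ((m:ℝ) + 1 + y)) + e * (2 * y)) y := by
    intro y hy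
    have hi := hasDerivAt_id' y
    have hq : 1 + x * y ≠ 0 := by positivity
    apply HasDerivAt.add
    · apply HasDerivAt.add
      · refine HasDerivAt.congr_deriv (((hi.const_mul x).const_add 1).log (by simpa using hq)) ?_
        simp
      · apply HasDerivAt.fun_sum
        intro m _
        have hm : (m:ℝ) + 1 + (x + y) ≠ 0 := by positivity
        have hm' : (m:ℝ) + 1 + y ≠ 0 := by positivity
        exact (((hi.const_add x).const_add ((m:ℝ)+1)).log (by simpa using hm)).sub
          ((hi.const_add ((m:ℝ)+1)).log (by simpa using hm'))
    · refine HasDerivAt.congr_deriv ((hi.pow 2).const_mul e) ?_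
      simp
  have hd2 : ∀ y : ℝ, 0 ≤ y → HasDerivAt (fun y : ℝ => 
      (x / (1 + x * y) + ∑ m ∈ Finset.range N, (1 / ((m:ℝ) + 1 + (x + y)) - 1 / ((m:ℝ) + 1 + y)) + e * (2 * y)))
      (- (x ^ 2 / (1 + x * y) ^ 2) + ∑ m ∈ Finset.range N, (1 / ((m:ℝ) + 1 + y) ^ 2 - 1 / ((m:ℝ) + 1 + (x + y)) ^ 2) + e * 2) y := by
    intro y hy
    have hi := hasDerivAt_id' y
    have hq : 1 + x * y ≠ 0 := by positivity
    apply HasDerivAt.add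
    · apply HasDerivAt.add
      · refine HasDerivAt.congr_deriv ((hasDerivAt_const y x).div ((hi.const_mul x).const_add 1) (by simpa using hq)) ?_
        simp
        ring
      · apply HasDerivAt.fun_sum
        intro m _
        have hm : (m:ℝ) + 1 + (x + y) ≠ 0 := by positivity
        have hm' : (m:ℝ) + 1 + y ≠ 0 := by positivity
        refine HasDerivAt.congr_deriv (((hasDerivAt_const y (1:ℝ)).div ((hi.const_add x).const_add ((m:ℝ)+1)) (by simpa using hm)).sub
          ((hasDerivAt_const y (1:ℝ)).div (hi.const_add ((m:ℝ)+1)) (by simpa using hm'))) ?_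
        simp
        ring
    · refine HasDerivAt.congr_deriv ((hi.const_mul 2).const_mul e) ?_
      simp
  refine concaveOn_of_hasDerivWithinAt2_nonpos (convex_Icc 0 1) ?_ 
    (fun y hy => (hd1 y ?_).hasDerivWithinAt) (fun y hy => (hd2 y ?_).hasDerivWithinAt) ?_
  · intro y hy
    exact (hd1 y hy.1).continuousAt.continuousWithinAt
  · exact (interior_subset hy).1
  · exact (interior_subset hy).1
  · intro y hy
    have hy := interior_subset hy
    have := grl_main x y hx hy.1 hy.2 N
    rw [he]
    linarith

theorem gamma_ratio_lower_bound (x y : ℝ) (hx : 1 < x) (hy0 : 0 < y) (hy1 : y < 1) :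
    Real.Gamma (1 + x) * Real.Gamma (1 + y) / Real.Gamma (1 + x + y) > 1 / (1 + x * y) := by
  obtain ⟨e, he⟩ : ∃ e, e = (1 / 4) * (1 / 9 - 1 / (x + 2) ^ 2) := ⟨_, rfl⟩
  have he0 : 0 < e := by
    have : 1 / (x + 2) ^ 2 < 1 / 9 := one_div_lt_one_div_of_lt (by norm_num) (by nlinarith)
    rw [he]; linarith
  let L := Real.BohrMollerup.logGammaSeq
  let H : ℕ → ℝ → ℝ := fun n y => Real.log (1 + x * y) + L (1 + x) n + L (1 + y) n - L (1 + x + y) n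
  let K : ℝ → ℝ := fun y => Real.log (1 + x * y) + Real.log (Real.Gamma (1 + x)) + Real.log (Real.Gamma (1 + y))
    - Real.log (Real.Gamma (1 + x + y))
  have hlim : ∀ y : ℝ, 0 ≤ y → Filter.Tendsto (fun n => H n y) Filter.atTop (nhds (K y)) := by
    intro y hy
    exact ((tendsto_const_nhds.add (Real.BohrMollerup.tendsto_log_gamma (by linarith))).add
      (Real.BohrMollerup.tendsto_log_gamma (by linarith))).sub
      (Real.BohrMollerup.tendsto_log_gamma (by linarith))
  have hineq : ∀ n, (1 - y) * H n 0 + y * (H n 1 + e) ≤ H n y + e * y ^ 2 := by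
    intro n
    have hc := (grl_concave x e hx.le he (n+1)).2 (Set.left_mem_Icc.2 zero_le_one)
      (Set.right_mem_Icc.2 zero_le_one) (sub_nonneg.2 hy1.le) hy0.le (by ring)
    have key : ∀ z, H n z = (Real.log (1 + x * z) +
      ∑ m ∈ Finset.range (n+1), (Real.log ((m:ℝ) + 1 + (x + z)) - Real.log ((m:ℝ) + 1 + z)))
       + (L (1 + x) n - x * Real.log n) := by
      intro z
      simp only [H, L, Real.BohrMollerup.logGammaSeq, Finset.sum_sub_distrib]
      have e1 : ∀ m : ℕ, (m:ℝ) + 1 + (x + z) = 1 + x + z + m := fun m => by ring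
      have e2 : ∀ m : ℕ, (m:ℝ) + 1 + z = 1 + z + m := fun m => by ring
      simp only [e1, e2]
      ring
    rw [key, key, key]
    simp only [smul_eq_mul, mul_zero, mul_one, zero_add] at hc ⊢
    linarith
  have hK : (1 - y) * K 0 + y * (K 1 + e) ≤ K y + e * y ^ 2 :=
    le_of_tendsto_of_tendsto'
      (((hlim 0 le_rfl).const_mul _).add (((hlim 1 zero_le_one).add_const e).const_mul y))
      ((hlim y hy0.le).add_const _) hineq
  have hK0 : K 0 = 0 := by simp [K]
  have hK1 : K 1 = 0 := by
    simp only [K]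
    rw [Real.Gamma_add_one (s := 1 + x) (by linarith), Real.log_mul (by linarith) (Real.Gamma_pos_of_pos (by linarith)).ne']
    norm_num
  have hKy : 0 < K y := by
    rw [hK0, hK1] at hK
    nlinarith [mul_pos he0 (mul_pos hy0 (sub_pos.2 hy1))]
  have g1 := Real.Gamma_pos_of_pos (s := 1 + x) (by linarith)
  have g2 := Real.Gamma_pos_of_pos (s := 1 + y) (by linarith)
  have g3 := Real.Gamma_pos_of_pos (s := 1 + x + y) (by linarith)
  have hq : 0 < 1 + x * y := by positivity
  simp only [K] at hKy
  rw [← Real.log_mul hq.ne' g1.ne', ← Real.log_mul (mul_pos hq g1).ne' g2.ne', sub_pos,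
    Real.log_lt_log_iff g3 (by positivity)] at hKy
  rw [gt_iff_lt, div_lt_div_iff₀ hq g3]
  linarith
end

section
/- For all real x with 0 < x < π, the following inequalities hold: (2 − x⁴/60 + cos x)/3 < (sin x)/x < (8 + 7·cos x)/(15 − x²). -/
theorem pos_of_deriv_aux (f g : ℝ → ℝ) (h0 : f 0 = 0) (hd : ∀ x, HasDerivAt f (g x) x)
    (hg : ∀ x, 0 < x → x < Real.pi → 0 < g x) : ∀ x, 0 < x → x < Real.pi → 0 < f x := by
  intro x hx hxp
  have hm : StrictMonoOn f (Set.Icc 0 x) := by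
    apply strictMonoOn_of_deriv_pos (convex_Icc 0 x)
    · exact fun y _ => (hd y).continuousAt.continuousWithinAt
    · intro y hy
      rw [interior_Icc] at hy
      rw [(hd y).deriv]
      exact hg y hy.1 (hy.2.trans hxp)
  have := hm (Set.left_mem_Icc.2 hx.le) (Set.right_mem_Icc.2 hx.le) hx
  rwa [h0] at this

theorem lower_aux_s12 : ∀ x, 0 < x → x < Real.pi →
    0 < 3 * Real.sin x - 2 * x - x * Real.cos x + x ^ 5 / 60 := by
  refine pos_of_deriv_aux _ (fun x => 2 * Real.cos x - 2 + x * Real.sin x + x ^ 4 / 12)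
    (by simp) (fun x => ?_) ?_
  · have := ((((Real.hasDerivAt_sin x).const_mul 3).sub ((hasDerivAt_id' x).const_mul 2)).sub
      ((hasDerivAt_id' x).mul (Real.hasDerivAt_cos x))).add ((hasDerivAt_pow 5 x).div_const 60)
    refine this.congr_deriv ?_
    push_cast; ring
  refine pos_of_deriv_aux _ (fun x => - Real.sin x + x * Real.cos x + x ^ 3 / 3)
    (by simp) (fun x => ?_) ?_
  · have := ((((Real.hasDerivAt_cos x).const_mul 2).sub_const 2).add
      ((hasDerivAt_id' x).mul (Real.hasDerivAt_sin x))).add ((hasDerivAt_pow 4 x).div_const 12)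
    refine this.congr_deriv ?_
    push_cast; ring
  refine pos_of_deriv_aux _ (fun x => x * (x - Real.sin x))
    (by simp) (fun x => ?_) ?_
  · have := ((Real.hasDerivAt_sin x).neg.add
      ((hasDerivAt_id' x).mul (Real.hasDerivAt_cos x))).add ((hasDerivAt_pow 3 x).div_const 3)
    refine this.congr_deriv ?_
    push_cast; ring
  exact fun x hx _ => mul_pos hx (sub_pos.2 (Real.sin_lt hx))

theorem upper_aux : ∀ x, 0 < x → x < Real.pi →
    0 < x * (8 + 7 * Real.cos x) - (15 - x ^ 2) * Real.sin x := by
  refine pos_of_deriv_aux _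
    (fun x => 8 - 8 * Real.cos x - 5 * (x * Real.sin x) + x ^ 2 * Real.cos x)
    (by simp) (fun x => ?_) ?_
  · have := ((hasDerivAt_id' x).mul (((Real.hasDerivAt_cos x).const_mul 7).const_add 8)).sub
      (((hasDerivAt_pow 2 x).const_sub 15).mul (Real.hasDerivAt_sin x))
    refine this.congr_deriv ?_
    push_cast; ring
  refine pos_of_deriv_aux _
    (fun x => 3 * Real.sin x - 3 * (x * Real.cos x) - x ^ 2 * Real.sin x)
    (by simp) (fun x => ?_) ?_
  · have := ((((Real.hasDerivAt_cos x).const_mul 8).const_sub 8).sub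
      (((hasDerivAt_id' x).mul (Real.hasDerivAt_sin x)).const_mul 5)).add
      ((hasDerivAt_pow 2 x).mul (Real.hasDerivAt_cos x))
    refine this.congr_deriv ?_
    push_cast; ring
  refine pos_of_deriv_aux _ (fun x => x * (Real.sin x - x * Real.cos x))
    (by simp) (fun x => ?_) ?_
  · have := (((Real.hasDerivAt_sin x).const_mul 3).sub
      (((hasDerivAt_id' x).mul (Real.hasDerivAt_cos x)).const_mul 3)).sub
      ((hasDerivAt_pow 2 x).mul (Real.hasDerivAt_sin x))
    refine this.congr_deriv ?_
    push_cast; ring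
  intro x hx hxp
  refine mul_pos hx ?_
  revert x
  refine pos_of_deriv_aux _ (fun x => x * Real.sin x) (by simp) (fun x => ?_) ?_
  · have := (Real.hasDerivAt_sin x).sub ((hasDerivAt_id' x).mul (Real.hasDerivAt_cos x))
    refine this.congr_deriv ?_
    ring
  exact fun x hx hxp => mul_pos hx (Real.sin_pos_of_pos_of_lt_pi hx hxp)

theorem sin_div_bounds_corollary (x : ℝ) (hx0 : 0 < x) (hxpi : x < Real.pi) :
    (2 - x ^ 4 / 60 + Real.cos x) / 3 < Real.sin x / x ∧
    Real.sin x / x < (8 + 7 * Real.cos x) / (15 - x ^ 2) := by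
  have h1 := lower_aux_s12 x hx0 hxpi
  have h2 := upper_aux x hx0 hxpi
  have h3 : 0 < 15 - x ^ 2 := by nlinarith [Real.pi_lt_d2]
  constructor
  · rw [div_lt_div_iff₀ (by norm_num) hx0]
    nlinarith
  · rw [div_lt_div_iff₀ hx0 h3]
    nlinarith
end

section
/- For all real x with 0 < x < π/2, the following two-sided inequality holds: (π² − x² − π²x²/3)/(π² − x²) < x/(tan x) < (π² − 4x²)/(π² − x²). -/
theorem aux_hasSum (t : ℝ) (h0 : 0 < t) (h1 : t < 1) :
    HasSum (fun n : ℕ => 1 / (((n : ℝ) + 1) ^ 2 - t ^ 2))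
      ((1 - Real.pi * t * (Real.cos (Real.pi * t) / Real.sin (Real.pi * t))) / (2 * t ^ 2)) := by
  have hz : (t : ℂ) ∈ Complex.integerComplement := by
    rw [Complex.mem_integerComplement_iff]
    rintro ⟨n, hn⟩
    have hn' : (n : ℝ) = t := by exact_mod_cast hn
    have a : (0 : ℝ) < n := by rw [hn']; exact h0
    have b : (n : ℝ) < 1 := by rw [hn']; exact h1
    have a' : 0 < n := by exact_mod_cast a
    have b' : n < 1 := by exact_mod_cast b
    omega
  have hs := (summable_cotTerm hz).hasSum
  have hr := cot_series_rep' hz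
  have hs2 : HasSum (fun n => cotTerm (t : ℂ) n)
      (((Real.pi * (Real.cos (Real.pi * t) / Real.sin (Real.pi * t)) - 1 / t : ℝ)) : ℂ) := by
    convert hs using 1
    rw [← hr, Complex.cot]
    push_cast
    rfl
  have hs3 : HasSum (fun n : ℕ => 1 / (t - ((n : ℝ) + 1)) + 1 / (t + ((n : ℝ) + 1)))
      (Real.pi * (Real.cos (Real.pi * t) / Real.sin (Real.pi * t)) - 1 / t) := by
    rw [← Complex.hasSum_ofReal]
    convert hs2 using 2 with n
    simp [cotTerm]
  have h := hs3.mul_left (-1 / (2 * t))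
  have fE : (fun n : ℕ => 1 / (((n : ℝ) + 1) ^ 2 - t ^ 2)) = fun n : ℕ =>
      -1 / (2 * t) * (1 / (t - ((n : ℝ) + 1)) + 1 / (t + ((n : ℝ) + 1))) := by
    funext n
    have hn : (0 : ℝ) ≤ n := n.cast_nonneg
    have e1 : t - ((n : ℝ) + 1) ≠ 0 := by linarith
    have e2 : t + ((n : ℝ) + 1) ≠ 0 := by positivity
    have e3 : ((n : ℝ) + 1) ^ 2 - t ^ 2 = -((t - ((n : ℝ) + 1)) * (t + ((n : ℝ) + 1))) := by ring
    rw [e3]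
    field_simp
    ring
  have vE : (1 - Real.pi * t * (Real.cos (Real.pi * t) / Real.sin (Real.pi * t))) / (2 * t ^ 2)
      = -1 / (2 * t) * (Real.pi * (Real.cos (Real.pi * t) / Real.sin (Real.pi * t)) - 1 / t) := by
    generalize Real.cos (Real.pi * t) / Real.sin (Real.pi * t) = c
    field_simp
    ring
  rw [fE, vE]
  exact h

theorem x_div_tan_bounds (x : ℝ) (hx0 : 0 < x) (hxpi : x < Real.pi / 2) :
    (Real.pi ^ 2 - x ^ 2 - Real.pi ^ 2 * x ^ 2 / 3) / (Real.pi ^ 2 - x ^ 2) < x / Real.tan x ∧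
    x / Real.tan x < (Real.pi ^ 2 - 4 * x ^ 2) / (Real.pi ^ 2 - x ^ 2) := by
  have hpi := Real.pi_pos
  obtain ⟨t, rfl⟩ : ∃ t, x = Real.pi * t := ⟨x / Real.pi, by field_simp⟩
  have h0 : 0 < t := pos_of_mul_pos_right hx0 hpi.le
  have h1 : t < 1 / 2 := by
    by_contra h
    push Not at h
    nlinarith
  have ht2 : t ^ 2 < 1 / 4 := by nlinarith
  have hS := aux_hasSum t h0 (by linarith)
  have hH := aux_hasSum (1 / 2) (by norm_num) (by norm_num)
  rw [show Real.pi * (1 / 2) = Real.pi / 2 by ring, Real.cos_pi_div_two] at hH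
  norm_num at hH
  have hZ := (hasSum_nat_add_iff' 1).mpr hasSum_zeta_two
  simp only [Finset.range_one, Finset.sum_singleton] at hZ
  norm_num at hZ
  have hA := hH.mul_left ((3 / 4) / (1 - t ^ 2))
  have hB := hZ.mul_left (1 / (1 - t ^ 2))
  have hd : 0 < 1 - t ^ 2 := by linarith
  have E : Real.pi * t / Real.tan (Real.pi * t)
      = Real.pi * t * (Real.cos (Real.pi * t) / Real.sin (Real.pi * t)) := by
    rw [Real.tan_eq_sin_div_cos, div_eq_mul_inv, inv_div]
  rw [← E] at hS
  generalize Real.pi * t / Real.tan (Real.pi * t) = c at hS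
  have U := hasSum_lt (i := 1) (fun n => by
    have hn : (0 : ℝ) ≤ n := n.cast_nonneg
    have p1 : 0 < ((n : ℝ) + 1) ^ 2 - 1 / 4 := by nlinarith
    have p2 : 0 < ((n : ℝ) + 1) ^ 2 - t ^ 2 := by nlinarith
    show 3 / 4 / (1 - t ^ 2) * (((n : ℝ) + 1) ^ 2 - 1 / 4)⁻¹ ≤ 1 / (((n : ℝ) + 1) ^ 2 - t ^ 2)
    rw [← div_eq_mul_inv, div_div, div_le_div_iff₀ (by positivity) p2]
    have : 0 ≤ (((n : ℝ) + 1) ^ 2 - 1) * (1 / 4 - t ^ 2) :=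
      mul_nonneg (by nlinarith) (by linarith)
    nlinarith) (by
    show 3 / 4 / (1 - t ^ 2) * ((((1 : ℕ) : ℝ) + 1) ^ 2 - 1 / 4)⁻¹ < 1 / ((((1 : ℕ) : ℝ) + 1) ^ 2 - t ^ 2)
    rw [← div_eq_mul_inv, div_div, div_lt_div_iff₀ (mul_pos hd (by norm_num)) (by norm_num; linarith)]
    norm_num
    linarith) hA hS
  have L := hasSum_lt (i := 1) (fun n => by
    have hn : (0 : ℝ) ≤ n := n.cast_nonneg
    have p2 : 0 < ((n : ℝ) + 1) ^ 2 - t ^ 2 := by nlinarith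
    show 1 / (((n : ℝ) + 1) ^ 2 - t ^ 2) ≤ 1 / (1 - t ^ 2) * (((n : ℝ) + 1) ^ 2)⁻¹
    rw [← div_eq_mul_inv, div_div, div_le_div_iff₀ p2 (by positivity)]
    have : 0 ≤ (((n : ℝ) + 1) ^ 2 - 1) * t ^ 2 :=
      mul_nonneg (by nlinarith) (by positivity)
    nlinarith) (by
    show 1 / ((((1 : ℕ) : ℝ) + 1) ^ 2 - t ^ 2) < 1 / (1 - t ^ 2) * ((((1 : ℕ) : ℝ) + 1) ^ 2)⁻¹
    rw [← div_eq_mul_inv, div_div, div_lt_div_iff₀ (by norm_num; linarith) (mul_pos hd (by norm_num))]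
    norm_num
    nlinarith) hS hB
  have hp2 : 0 < Real.pi ^ 2 := by positivity
  have F : Real.pi ^ 2 - (Real.pi * t) ^ 2 = Real.pi ^ 2 * (1 - t ^ 2) := by ring
  have t2 : 0 < t ^ 2 := by positivity
  constructor
  · have G : (Real.pi ^ 2 - (Real.pi * t) ^ 2 - Real.pi ^ 2 * (Real.pi * t) ^ 2 / 3) / (Real.pi ^ 2 - (Real.pi * t) ^ 2)
        = 1 - 2 * t ^ 2 * (1 / (1 - t ^ 2) * (Real.pi ^ 2 / 6)) := by
      rw [F]; field_simp; ring
    rw [G]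
    rw [div_lt_iff₀ (by positivity)] at L
    norm_num at L ⊢
    linarith
  · have G : (Real.pi ^ 2 - 4 * (Real.pi * t) ^ 2) / (Real.pi ^ 2 - (Real.pi * t) ^ 2)
        = 1 - 2 * t ^ 2 * (3 / 4 / (1 - t ^ 2) * 2) := by
      rw [F]; field_simp; ring
    rw [G]
    rw [lt_div_iff₀ (by positivity)] at U
    linarith
end

section
/- For all real t with 0 < t < 1, the following two-sided inequality holds: (4/π)·t/(1 − t²) < tan(πt/2) < (π/2)·t/(1 − t²). -/
lemma aux_mvt (F F' : ℝ → ℝ) (hF : ∀ x, HasDerivAt F (F' x) x) (h0 : F 0 = 0) (h1 : F 1 = 0)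
    (t : ℝ) (ht0 : 0 < t) (ht1 : t < 1)
    (H : ∀ a b, 0 < a → a < b → b < 1 → F' a ≤ 0 → 0 ≤ F' b → False) : 0 < F t := by
  by_contra! hn
  have hc : Continuous F := continuous_iff_continuousAt.2 fun x => (hF x).continuousAt
  obtain ⟨a, ⟨ha0, ha1⟩, ha⟩ := exists_hasDerivAt_eq_slope F F' ht0 hc.continuousOn (fun x _ => hF x)
  obtain ⟨b, ⟨hb0, hb1⟩, hb⟩ := exists_hasDerivAt_eq_slope F F' ht1 hc.continuousOn (fun x _ => hF x)
  refine H a b ha0 (ha1.trans hb0) hb1 ?_ ?_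
  · rw [ha]; exact div_nonpos_of_nonpos_of_nonneg (by linarith) (by linarith)
  · rw [hb]; exact div_nonneg (by linarith) (by linarith)

lemma aux_sin (p q : ℝ) (hq : 0 < q) (hqp : q < p) (hp : p < Real.pi) :
    q * Real.sin p < p * Real.sin q := by
  have hp0 : 0 < p := hq.trans hqp
  have m1 : p ∈ Set.Icc 0 Real.pi := ⟨hp0.le, hp.le⟩
  have m2 : (0 : ℝ) ∈ Set.Icc 0 Real.pi := ⟨le_rfl, Real.pi_pos.le⟩
  have c1 : 0 < q / p := by positivity
  have c2 : 0 < 1 - q / p := by rw [sub_pos, div_lt_one hp0]; exact hqp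
  have h := strictConcaveOn_sin_Icc.2 m1 m2 hp0.ne' c1 c2 (by ring)
  simp only [smul_eq_mul, Real.sin_zero, mul_zero, add_zero] at h
  rw [div_mul_cancel₀ _ hp0.ne', div_mul_eq_mul_div, div_lt_iff₀ hp0] at h
  linarith

lemma aux_tan (a b : ℝ) (ha : 0 < a) (hab : a < b) (hb : b < Real.pi / 2) :
    b * Real.cos b * Real.sin a < a * Real.cos a * Real.sin b := by
  have h := aux_sin (a + b) (b - a) (by linarith) (by linarith) (by linarith)
  rw [Real.sin_add, Real.sin_sub] at h
  linarith

theorem tan_half_pi_t_bounds (t : ℝ) (ht0 : 0 < t) (ht1 : t < 1) :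
    (4 / Real.pi) * (t / (1 - t ^ 2)) < Real.tan (Real.pi * t / 2) ∧
    Real.tan (Real.pi * t / 2) < (Real.pi / 2) * (t / (1 - t ^ 2)) := by
  have hpi := Real.pi_pos
  have hlin : ∀ x : ℝ, HasDerivAt (fun x : ℝ => Real.pi * x / 2) (Real.pi / 2) x := fun x => by
    simpa using ((hasDerivAt_id x).const_mul Real.pi).div_const 2
  have hs := fun x => (hlin x).sin
  have hco := fun x => (hlin x).cos
  have hq : ∀ x : ℝ, HasDerivAt (fun x : ℝ => 1 - x ^ 2) (-(2 * x)) x := fun x => by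
    simpa using (hasDerivAt_pow 2 x).const_sub 1
  have hcpos : ∀ x : ℝ, 0 < x → x < 1 → 0 < Real.cos (Real.pi * x / 2) := fun x h0 h1 =>
    Real.cos_pos_of_mem_Ioo ⟨by nlinarith, by nlinarith⟩
  have hspos : ∀ x : ℝ, 0 < x → x < 1 → 0 < Real.sin (Real.pi * x / 2) := fun x h0 h1 =>
    Real.sin_pos_of_pos_of_lt_pi (by positivity) (by nlinarith)
  have hl : 0 < (1 - t ^ 2) * Real.sin (Real.pi * t / 2) -
      4 / Real.pi * (t * Real.cos (Real.pi * t / 2)) := by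
    refine aux_mvt (fun t => (1 - t ^ 2) * Real.sin (Real.pi * t / 2) -
      4 / Real.pi * (t * Real.cos (Real.pi * t / 2)))
      (fun t => Real.cos (Real.pi * t / 2) * (Real.pi / 2 * (1 - t ^ 2) - 4 / Real.pi))
      (fun x => ?_) (by simp) (by simp) t ht0 ht1 ?_
    · refine HasDerivAt.congr_deriv (((hq x).mul (hs x)).sub
        (((hasDerivAt_id x).mul (hco x)).const_mul (4 / Real.pi))) ?_
      simp only [id]
      field_simp
      ring
    · intro a b ha hab hb h1 h2
      have h1' := nonpos_of_mul_nonpos_right h1 (hcpos a ha (hab.trans hb))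
      have h2' := nonneg_of_mul_nonneg_right h2 (hcpos b (ha.trans hab) hb)
      have : Real.pi / 2 * (1 - b ^ 2) < Real.pi / 2 * (1 - a ^ 2) := by
        apply mul_lt_mul_of_pos_left _ (by positivity)
        nlinarith
      linarith
  have hu : 0 < Real.pi / 2 * (t * Real.cos (Real.pi * t / 2)) -
      (1 - t ^ 2) * Real.sin (Real.pi * t / 2) := by
    refine aux_mvt (fun t => Real.pi / 2 * (t * Real.cos (Real.pi * t / 2)) -
      (1 - t ^ 2) * Real.sin (Real.pi * t / 2))
      (fun t => t * ((Real.pi * t / 2) * Real.cos (Real.pi * t / 2) -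
        (Real.pi ^ 2 / 4 - 2) * Real.sin (Real.pi * t / 2)))
      (fun x => ?_) (by simp) (by simp) t ht0 ht1 ?_
    · refine HasDerivAt.congr_deriv ((((hasDerivAt_id x).mul (hco x)).const_mul (Real.pi / 2)).sub
        ((hq x).mul (hs x))) ?_
      simp only [id]
      ring
    · intro a b ha hab hb h1 h2
      have h1' := nonpos_of_mul_nonpos_right h1 ha
      have h2' := nonneg_of_mul_nonneg_right h2 (ha.trans hab)
      have h3 := aux_tan (Real.pi * a / 2) (Real.pi * b / 2) (by positivity)
        (by nlinarith) (by nlinarith)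
      have sa := hspos a ha (hab.trans hb)
      have sb := hspos b (ha.trans hab) hb
      have e1 := mul_nonneg h2' sa.le
      have e2 := mul_nonneg (neg_nonneg.2 h1') sb.le
      linarith
  have hc := hcpos t ht0 ht1
  have hd : 0 < 1 - t ^ 2 := by nlinarith
  rw [Real.tan_eq_sin_div_cos, ← mul_div_assoc, ← mul_div_assoc, div_lt_div_iff₀ hd hc,
    div_lt_div_iff₀ hc hd]
  constructor <;> linarith
end

section
/- For all real x with 0 < x < π, the following chain of inequalities holds with α = 16/π² and β = 1: ((π² − x²)/(π² + x²))^(4/(3β)) < (cos(x/2))^(4/3) < (sin x)/x < ((π² − x²)/(π² + x²))^(4/(3α)). -/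
open Real Filter Topology

lemma first_aux (y : ℝ) (hy0 : 0 < y) (hy : y < π / 2) :
    (π ^ 2 - 4 * y ^ 2) / (π ^ 2 + 4 * y ^ 2) < cos y := by
  have hp1 := pi_gt_d2
  have hp2 : π < 3.15 := pi_lt_d2
  rw [div_lt_iff₀ (by positivity)]
  rcases le_or_gt y 1.2 with h | h
  · have h1 := one_sub_sq_div_two_le_cos (x := y)
    have h2 : π ^ 2 < 9.93 := by nlinarith
    have h3 : y ^ 2 ≤ 1.44 := by nlinarith
    have h4 : 0 < y ^ 2 := by positivity
    have h5 : (1 - y ^ 2 / 2) * (π ^ 2 + 4 * y ^ 2) ≤ cos y * (π ^ 2 + 4 * y ^ 2) :=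
      mul_le_mul_of_nonneg_right h1 (by positivity)
    nlinarith [mul_pos h4 (show 0 < 8 - π ^ 2 / 2 - 2 * y ^ 2 by linarith)]
  · obtain ⟨d, hd⟩ : ∃ d, d = π / 2 - y := ⟨_, rfl⟩
    have hd0 : 0 < d := by linarith
    have hd1 : d < 0.38 := by linarith
    have hyd : y = π / 2 - d := by linarith
    have h1 := sin_gt_sub_cube hd0
    rw [hyd, cos_pi_div_two_sub]
    have hd2 : d ^ 2 ≤ 0.15 := by nlinarith
    have h2 : 0.97 * d ≤ sin d := by nlinarith
    have h5 : 0.97 * d * (π ^ 2 + 4 * (π / 2 - d) ^ 2) ≤ sin d * (π ^ 2 + 4 * (π / 2 - d) ^ 2) :=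
      mul_le_mul_of_nonneg_right h2 (by positivity)
    refine lt_of_lt_of_le ?_ h5
    have h6 : 0 < 0.97 * (π ^ 2 + 4 * (π / 2 - d) ^ 2) - (4 * π - 4 * d) := by
      nlinarith
    nlinarith [mul_pos hd0 h6]

lemma mid_aux (y : ℝ) (hy0 : 0 < y) (hy : y < π / 2) : cos y < (sin y / y) ^ 3 := by
  have hp2 : π < 3.15 := pi_lt_d2
  have hy2 : y ^ 2 < 2.5 := by nlinarith
  have hy2' : 0 < y ^ 2 := by positivity
  have h1 : 1 - y ^ 2 / 6 ≤ sin y / y := by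
    rw [le_div_iff₀ hy0]
    nlinarith [sin_gt_sub_cube hy0]
  have h2 : (1 - y ^ 2 / 6) ^ 3 ≤ (sin y / y) ^ 3 :=
    pow_le_pow_left₀ (by linarith) h1 3
  refine lt_of_lt_of_le ?_ h2
  have h3 := sin_gt_sub_cube (half_pos hy0)
  have h4 : (y / 2 - (y / 2) ^ 3 / 6) ^ 2 ≤ sin (y / 2) ^ 2 := by
    apply pow_le_pow_left₀ _ h3.le
    nlinarith
  have h5 : cos y = 1 - 2 * sin (y / 2) ^ 2 := by
    have := cos_two_mul (y / 2)
    rw [show 2 * (y / 2) = y by ring] at this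
    nlinarith [sin_sq_add_cos_sq (y / 2)]
  rw [h5]
  obtain ⟨z, hz⟩ : ∃ z, z = y ^ 2 := ⟨_, rfl⟩
  have h6 : (y / 2 - (y / 2) ^ 3 / 6) ^ 2 = z / 4 * (1 - z / 24) ^ 2 := by rw [hz]; ring
  rw [h6] at h4
  rw [← hz] at hy2 hy2' ⊢
  nlinarith [mul_pos (mul_pos hy2' hy2') (show 0 < 3 - z by linarith), pow_pos hy2' 3]

lemma prod_aux (u : ℝ) (hu0 : 0 < u) (hu : u < 1) :
    sin (π * u) ≤ π * u * ((1 - u ^ 2) * exp (-((π ^ 2 / 6 - 1) * u ^ 2))) := by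
  have hu2 : u ^ 2 < 1 := by nlinarith
  have A := (tendsto_add_atTop_iff_nat 1).2 (Real.tendsto_euler_sin_prod u)
  have S : Tendsto (fun n : ℕ => ∑ j ∈ Finset.range n, 1 / ((j : ℝ) + 1 + 1) ^ 2) atTop
      (𝓝 (π ^ 2 / 6 - 1)) := by
    have := (hasSum_nat_add_iff' 2).2 hasSum_zeta_two
    have := this.tendsto_sum_nat
    simp only [Finset.sum_range_succ, Finset.sum_range_zero] at this
    convert this using 2
    · apply Finset.sum_congr rfl
      intro j _
      push_cast
      ring
    · norm_num
  have B : Tendsto (fun n : ℕ => π * u * ((1 - u ^ 2) *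
      exp (-((∑ j ∈ Finset.range n, 1 / ((j : ℝ) + 1 + 1) ^ 2) * u ^ 2)))) atTop
      (𝓝 (π * u * ((1 - u ^ 2) * exp (-((π ^ 2 / 6 - 1) * u ^ 2))))) :=
    (((continuous_exp.tendsto _).comp (S.mul_const _).neg).const_mul _).const_mul _
  refine le_of_tendsto_of_tendsto' A B fun n => ?_
  refine mul_le_mul_of_nonneg_left ?_ (by positivity)
  rw [Finset.prod_range_succ', mul_comm]
  simp only [Nat.cast_zero, zero_add, one_pow, div_one]
  refine mul_le_mul_of_nonneg_left ?_ (by linarith)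
  rw [Finset.sum_mul, ← Finset.sum_neg_distrib, exp_sum]
  refine Finset.prod_le_prod ?_ ?_
  · intro j _
    push_cast
    have : u ^ 2 / ((j : ℝ) + 1 + 1) ^ 2 ≤ 1 := by
      rw [div_le_one (by positivity)]
      have : (0 : ℝ) ≤ j := Nat.cast_nonneg j
      nlinarith
    linarith
  · intro j _
    push_cast
    have := one_sub_le_exp_neg (u ^ 2 / ((j : ℝ) + 1 + 1) ^ 2)
    rwa [show 1 / ((j : ℝ) + 1 + 1) ^ 2 * u ^ 2 = u ^ 2 / ((j : ℝ) + 1 + 1) ^ 2 by ring]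

lemma last_aux (t : ℝ) (h0 : 0 < t) (h1 : t < 1) :
    (1 - t) * exp (-((π ^ 2 / 6 - 1) * t)) < ((1 - t) / (1 + t)) ^ (π ^ 2 / 12) := by
  have hp1 := pi_gt_d2
  have hp2 : π < 3.15 := pi_lt_d2
  have hm : 0 < 1 - t := by linarith
  have hp : 0 < 1 + t := by linarith
  rw [rpow_def_of_pos (by positivity)]
  nth_rewrite 1 [← exp_log hm]
  rw [← exp_add, exp_lt_exp, log_div hm.ne' hp.ne']
  have l1 := log_lt_sub_one_of_pos hm (by linarith)
  have l2 := log_lt_sub_one_of_pos hp (by linarith)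
  have c : 0 < 1 - π ^ 2 / 12 := by nlinarith
  have c' : 0 < π ^ 2 / 12 := by positivity
  nlinarith [mul_lt_mul_of_pos_left l1 c, mul_lt_mul_of_pos_left l2 c']

theorem sin_div_redheffer_chain (x : ℝ) (hx0 : 0 < x) (hxpi : x < Real.pi) :
    ((Real.pi ^ 2 - x ^ 2) / (Real.pi ^ 2 + x ^ 2)) ^ (4 / (3 * (1 : ℝ))) <
      Real.cos (x / 2) ^ ((4 : ℝ) / 3) ∧
    Real.cos (x / 2) ^ ((4 : ℝ) / 3) < Real.sin x / x ∧
    Real.sin x / x <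
      ((Real.pi ^ 2 - x ^ 2) / (Real.pi ^ 2 + x ^ 2)) ^ (4 / (3 * (16 / Real.pi ^ 2))) := by
  have hy0 : 0 < x / 2 := by linarith
  have hy : x / 2 < π / 2 := by linarith
  have hpi := pi_pos
  refine ⟨?_, ?_, ?_⟩
  · rw [mul_one]
    have h := first_aux (x / 2) hy0 hy
    rw [show 4 * (x / 2) ^ 2 = x ^ 2 by ring] at h
    refine rpow_lt_rpow ?_ h (by norm_num)
    apply div_nonneg <;> nlinarith
  · have h := mid_aux (x / 2) hy0 hy
    have hc : 0 < cos (x / 2) := cos_pos_of_mem_Ioo ⟨by linarith, hy⟩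
    have hs : 0 < sin (x / 2) := sin_pos_of_pos_of_lt_pi hy0 (by linarith)
    have e : sin x / x = cos (x / 2) * (sin (x / 2) / (x / 2)) := by
      have := sin_two_mul (x / 2)
      rw [show 2 * (x / 2) = x by ring] at this
      rw [this]; field_simp
    rw [e, show (4 : ℝ) / 3 = 1 + 1 / 3 by norm_num, rpow_add hc, rpow_one]
    refine mul_lt_mul_of_pos_left ?_ hc
    have h3 := rpow_lt_rpow hc.le h (show (0 : ℝ) < 1 / 3 by norm_num)
    rwa [← rpow_natCast, ← rpow_mul (by positivity), show ((3 : ℕ) : ℝ) * (1 / 3) = 1 by norm_num,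
      rpow_one] at h3
  · have hu0 : 0 < x / π := by positivity
    have hu1 : x / π < 1 := (div_lt_one hpi).2 hxpi
    have h := prod_aux (x / π) hu0 hu1
    have h' := last_aux ((x / π) ^ 2) (by positivity) (by nlinarith)
    rw [mul_div_cancel₀ _ hpi.ne'] at h
    have e1 : (1 - (x / π) ^ 2) / (1 + (x / π) ^ 2) = (π ^ 2 - x ^ 2) / (π ^ 2 + x ^ 2) := by
      field_simp
    have e2 : 4 / (3 * (16 / π ^ 2)) = π ^ 2 / 12 := by
      field_simp; norm_num
    rw [e1] at h'
    rw [e2]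
    refine lt_of_le_of_lt ?_ h'
    rw [div_le_iff₀ hx0, mul_comm _ x]
    exact h
end

section
/- For all real x with 0 < x < π, one has (sin x)/x < (π² − x²)/π². -/
theorem sin_div_lt_one_sub_sq (x : ℝ) (hx0 : 0 < x) (hxpi : x < Real.pi) :
    Real.sin x / x < (Real.pi ^ 2 - x ^ 2) / Real.pi ^ 2 := by
  have hpi := Real.pi_pos
  obtain ⟨z, rfl⟩ : ∃ z, x = Real.pi * z := ⟨x / Real.pi, by field_simp⟩
  have hz0 : 0 < z := by
    by_contra h
    nlinarith
  have hz1 : z < 1 := by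
    by_contra h
    nlinarith
  have hzz : z ^ 2 < 1 := by nlinarith
  have hz2 : 0 < z ^ 2 := by positivity
  have hf : ∀ j : ℕ, 0 ≤ 1 - z ^ 2 / ((j : ℝ) + 1) ^ 2 ∧ 1 - z ^ 2 / ((j : ℝ) + 1) ^ 2 ≤ 1 := by
    intro j
    have hj : (0 : ℝ) ≤ j := Nat.cast_nonneg j
    constructor
    · rw [sub_nonneg, div_le_one (by positivity)]
      nlinarith
    · have : 0 ≤ z ^ 2 / ((j : ℝ) + 1) ^ 2 := by positivity
      linarith
  have hprod : ∀ n : ℕ, ∏ j ∈ Finset.range (n + 2), (1 - z ^ 2 / ((j : ℝ) + 1) ^ 2)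
      ≤ (1 - z ^ 2) * (1 - z ^ 2 / 4) := by
    intro n
    induction n with
    | zero =>
      apply le_of_eq
      norm_num [Finset.prod_range_succ]
    | succ k ih =>
      rw [show k + 1 + 2 = (k + 2) + 1 from rfl, Finset.prod_range_succ]
      exact (mul_le_of_le_one_right (Finset.prod_nonneg fun j _ => (hf j).1) (hf _).2).trans ih
  have hlim := Real.tendsto_euler_sin_prod z
  have hle : Real.sin (Real.pi * z) ≤ Real.pi * z * ((1 - z ^ 2) * (1 - z ^ 2 / 4)) := by
    refine le_of_tendsto ((Filter.tendsto_add_atTop_iff_nat 2).2 hlim) (Filter.Eventually.of_forall ?_)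
    intro n
    exact mul_le_mul_of_nonneg_left (hprod n) hx0.le
  have e : (Real.pi ^ 2 - (Real.pi * z) ^ 2) / Real.pi ^ 2 = 1 - z ^ 2 := by
    field_simp
  rw [e, div_lt_iff₀ hx0]
  have h3 : (1 - z ^ 2) * (1 - z ^ 2 / 4) < 1 - z ^ 2 := by nlinarith
  have := mul_lt_mul_of_pos_left h3 hx0
  linarith
end

section
/- For all real x with 0 < x < π/2, the following inequalities hold: 2/π + ((π − 2)/π)·cos x < (sin x)/x, and (cos(x/2))^(4/3) < (sin x)/x < (2·2^(2/3)/π)·((1 + cos x)/2)^(2/3) < (4/π)·(1 + cos x)/2. -/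
open Real in
lemma aux_cusa (t : ℝ) (h0 : 0 < t) (h1 : t < π / 2) :
    3 * sin t * cos t < t * (1 + 2 * cos t ^ 2) := by
  have hm : StrictMonoOn (fun t : ℝ => t * (1 + 2 * cos t ^ 2) - 3 * sin t * cos t)
      (Set.Ico 0 (π / 2)) := by
    apply strictMonoOn_of_deriv_pos (convex_Ico _ _) (by fun_prop)
    intro y hy
    rw [interior_Ico] at hy
    have hd : HasDerivAt (fun t : ℝ => t * (1 + 2 * cos t ^ 2) - 3 * sin t * cos t)
        (4 * sin y * (sin y - y * cos y)) y := by
      have hD := ((hasDerivAt_id y).mul ((((hasDerivAt_cos y).pow 2).const_mul 2).const_add 1)).sub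
        (((hasDerivAt_sin y).const_mul 3).mul (hasDerivAt_cos y))
      refine hD.congr_deriv ?_
      simp
      linear_combination (-1) * sin_sq_add_cos_sq y
    rw [hd.deriv]
    have hs : 0 < sin y := sin_pos_of_pos_of_lt_pi hy.1 (by linarith [hy.2, pi_pos])
    have hc : 0 < cos y := cos_pos_of_mem_Ioo ⟨by linarith [hy.1, pi_pos], hy.2⟩
    have ht := lt_tan hy.1 hy.2
    rw [tan_eq_sin_div_cos, lt_div_iff₀ hc] at ht
    have : 0 < sin y - y * cos y := by linarith
    positivity
  have := hm ⟨le_refl _, by positivity⟩ ⟨h0.le, h1⟩ h0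
  simp at this
  linarith

open Real in
lemma aux_sin_s18 (t : ℝ) (h0 : 0 < t) : t - t ^ 3 / 6 < sin t := by
  have hm : StrictMonoOn (fun t : ℝ => sin t - (t - t ^ 3 / 6)) (Set.Ici 0) := by
    apply strictMonoOn_of_deriv_pos (convex_Ici _) (by fun_prop)
    intro y hy
    rw [interior_Ici] at hy
    have hd : HasDerivAt (fun t : ℝ => sin t - (t - t ^ 3 / 6))
        (cos y - (1 - y ^ 2 / 2)) y := by
      have hD := (hasDerivAt_sin y).sub ((hasDerivAt_id y).sub (((hasDerivAt_id y).pow 3).div_const 6))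
      refine hD.congr_deriv ?_
      simp
      ring
    rw [hd.deriv]
    have := one_sub_sq_div_two_lt_cos (x := y) (ne_of_gt hy)
    linarith
  have := hm (Set.self_mem_Ici) (Set.mem_Ici.2 h0.le) h0
  simp at this
  linarith

open Real in
lemma aux_low (t : ℝ) (h0 : 0 < t) (h1 : t ≤ 1) : t ^ 3 * cos t < sin t ^ 3 := by
  have hs := aux_sin_s18 t h0
  have hc := (abs_le.1 (cos_bound (x := t) (by rwa [abs_of_pos h0]))).2
  rw [abs_of_pos h0] at hc
  have h2 : t ^ 2 ≤ 1 := by nlinarith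
  have hp : 0 < t - t ^ 3 / 6 := by nlinarith
  have h3 : (t - t ^ 3 / 6) ^ 3 < sin t ^ 3 := pow_lt_pow_left₀ hs hp.le (by norm_num)
  have h4 : cos t < (1 - t ^ 2 / 6) ^ 3 := by
    have : 0 < t ^ 4 := by positivity
    nlinarith
  calc t ^ 3 * cos t < t ^ 3 * (1 - t ^ 2 / 6) ^ 3 := by gcongr
    _ = (t - t ^ 3 / 6) ^ 3 := by ring
    _ < _ := h3

open Real in
lemma aux_up (t : ℝ) (h0 : 0 < t) (h1 : t < π / 4) :
    sin t ^ 3 / (t ^ 3 * cos t) < 32 / π ^ 3 := by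
  have hpi := pi_pos
  have pos : ∀ y ∈ Set.Ioc 0 (π / 4), 0 < sin y ∧ 0 < cos y := fun y hy =>
    ⟨sin_pos_of_pos_of_lt_pi hy.1 (by linarith [hy.2]),
      cos_pos_of_mem_Ioo ⟨by linarith [hy.1], by linarith [hy.2]⟩⟩
  have hd : ∀ y ∈ Set.Ioc 0 (π / 4), HasDerivAt (fun t : ℝ => sin t ^ 3 / (t ^ 3 * cos t))
      (sin y ^ 2 * y ^ 2 * (y * (1 + 2 * cos y ^ 2) - 3 * sin y * cos y) / (y ^ 3 * cos y) ^ 2) y := by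
    intro y hy
    have hc := (pos y hy).2
    have hy0 := hy.1
    have hD := ((hasDerivAt_sin y).pow 3).div (((hasDerivAt_id y).pow 3).mul (hasDerivAt_cos y))
      (by simp; constructor <;> positivity)
    refine hD.congr_deriv ?_
    simp
    congr 1
    linear_combination (sin y ^ 2 * y ^ 3) * sin_sq_add_cos_sq y
  have hm : StrictMonoOn (fun t : ℝ => sin t ^ 3 / (t ^ 3 * cos t)) (Set.Ioc 0 (π / 4)) := by
    apply strictMonoOn_of_deriv_pos (convex_Ioc _ _)
      (fun y hy => (hd y hy).continuousAt.continuousWithinAt)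
    intro y hy
    have hy := interior_subset hy
    rw [(hd y hy).deriv]
    have := aux_cusa y hy.1 (by linarith [hy.2])
    have hy0 := hy.1
    obtain ⟨hs, hc⟩ := pos y hy
    have : 0 < y * (1 + 2 * cos y ^ 2) - 3 * sin y * cos y := by linarith
    positivity
  have := hm ⟨h0, h1.le⟩ ⟨by positivity, le_refl _⟩ h1
  refine this.trans_eq ?_
  simp only [sin_pi_div_four, cos_pi_div_four]
  have h2 : √2 ^ 2 = 2 := sq_sqrt (by norm_num)
  field_simp
  rw [h2]
  norm_num

open Real in
lemma aux_key (t : ℝ) (h0 : 0 < t) (h1 : t ≤ π / 4) :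
    2 * t ^ 2 * cos t < sin t * (t + sin t * cos t) := by
  have h := aux_low t h0 (by linarith [pi_lt_d2])
  have hs : 0 < sin t := sin_pos_of_pos_of_lt_pi h0 (by linarith [pi_pos])
  have hc : 0 < cos t := cos_pos_of_mem_Ioo ⟨by linarith [pi_pos], by linarith [pi_pos]⟩
  have hst : sin t < t := sin_lt h0
  -- multiply by t * s^2
  have h2 : 0 < t ^ 2 * cos t * (2 * t ^ 2 - sin t ^ 2) := by
    have : 0 < 2 * t ^ 2 - sin t ^ 2 := by nlinarith
    positivity
  have h3 : cos t * (2 * t ^ 2 - sin t ^ 2) * t ^ 3 < t * sin t * t ^ 3 := by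
    have ha : 0 < 2 * t ^ 2 - sin t ^ 2 := by nlinarith
    calc _ = t ^ 3 * cos t * (2 * t ^ 2 - sin t ^ 2) := by ring
      _ < sin t ^ 3 * (2 * t ^ 2 - sin t ^ 2) := by gcongr
      _ ≤ t * sin t * t ^ 3 := by
        have : 0 ≤ sin t * (t ^ 2 - sin t ^ 2) ^ 2 := by positivity
        nlinarith
  have := lt_of_mul_lt_mul_right h3 (by positivity)
  nlinarith

open Real in
lemma aux_first (x : ℝ) (h0 : 0 < x) (h1 : x < π / 2) :
    (x - sin x) / (x * (1 - cos x)) < 1 - 2 / π := by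
  have hpi := pi_pos
  have pos : ∀ y ∈ Set.Ioc 0 (π / 2), 0 < 1 - cos y := fun y hy => by
    have : cos y < cos 0 := cos_lt_cos_of_nonneg_of_le_pi le_rfl (by linarith [hy.2]) hy.1
    rw [cos_zero] at this
    linarith
  have hd : ∀ y ∈ Set.Ioc 0 (π / 2), HasDerivAt (fun x : ℝ => (x - sin x) / (x * (1 - cos x)))
      (((1 - cos y) * (y + sin y) - y ^ 2 * sin y) / (y * (1 - cos y)) ^ 2) y := by
    intro y hy
    have hc := pos y hy
    have hy0 := hy.1
    have hD := ((hasDerivAt_id y).sub (hasDerivAt_sin y)).div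
      ((hasDerivAt_id y).mul ((hasDerivAt_cos y).const_sub 1))
      (by simp only [id, Pi.mul_apply]; positivity)
    refine hD.congr_deriv ?_
    simp
    congr 1
    linear_combination y * sin_sq_add_cos_sq y
  have hm : StrictMonoOn (fun x : ℝ => (x - sin x) / (x * (1 - cos x))) (Set.Ioc 0 (π / 2)) := by
    apply strictMonoOn_of_deriv_pos (convex_Ioc _ _)
      (fun y hy => (hd y hy).continuousAt.continuousWithinAt)
    intro y hy
    have hy := interior_subset hy
    rw [(hd y hy).deriv]
    have hk := aux_key (y / 2) (by linarith [hy.1]) (by linarith [hy.2])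
    have hy0 := hy.1
    have hc := pos y hy
    have hs : 0 < sin (y / 2) :=
      sin_pos_of_pos_of_lt_pi (by linarith) (by linarith [hy.2])
    have e1 : sin y = 2 * sin (y / 2) * cos (y / 2) := by
      rw [← sin_two_mul]; ring_nf
    have e2 : 1 - cos y = 2 * sin (y / 2) ^ 2 := by
      have : cos y = cos (2 * (y / 2)) := by ring_nf
      rw [this, cos_two_mul, sin_sq]; ring
    have : 0 < (1 - cos y) * (y + sin y) - y ^ 2 * sin y := by
      rw [e1, e2]
      have := mul_pos hs (sub_pos.2 hk)
      nlinarith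
    positivity
  have := hm ⟨h0, h1.le⟩ ⟨by positivity, le_refl _⟩ h1
  refine this.trans_eq ?_
  simp only [sin_pi_div_two, cos_pi_div_two]
  field_simp
  norm_num

theorem sin_div_cos_bounds (x : ℝ) (hx0 : 0 < x) (hxpi : x < Real.pi / 2) :
    (2 / Real.pi + ((Real.pi - 2) / Real.pi) * Real.cos x < Real.sin x / x) ∧
    Real.cos (x / 2) ^ ((4 : ℝ) / 3) < Real.sin x / x ∧
    Real.sin x / x < (2 * 2 ^ ((2 : ℝ) / 3) / Real.pi) * ((1 + Real.cos x) / 2) ^ ((2 : ℝ) / 3) ∧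
    (2 * 2 ^ ((2 : ℝ) / 3) / Real.pi) * ((1 + Real.cos x) / 2) ^ ((2 : ℝ) / 3) <
      (4 / Real.pi) * ((1 + Real.cos x) / 2) := by
  have hpi := Real.pi_pos
  have hcx : 0 < Real.cos x := Real.cos_pos_of_mem_Ioo ⟨by linarith, hxpi⟩
  have hsx : 0 < Real.sin x := Real.sin_pos_of_pos_of_lt_pi hx0 (by linarith)
  have hcx1 : Real.cos x < 1 := by
    have := Real.cos_lt_cos_of_nonneg_of_le_pi le_rfl (by linarith) hx0
    rwa [Real.cos_zero] at this
  obtain ⟨t, rfl⟩ : ∃ t, x = 2 * t := ⟨x / 2, by ring⟩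
  have ht0 : 0 < t := by linarith
  have ht1 : t < Real.pi / 4 := by linarith
  have hc : 0 < Real.cos t := Real.cos_pos_of_mem_Ioo ⟨by linarith, by linarith⟩
  have e1 : Real.sin (2 * t) / (2 * t) = Real.sin t * Real.cos t / t := by
    rw [Real.sin_two_mul]; field_simp
  have e2 : 1 + Real.cos (2 * t) = 2 * Real.cos t ^ 2 := by
    rw [Real.cos_two_mul]; ring
  have e3 : (2 * 2 ^ ((2 : ℝ) / 3) / Real.pi) * ((1 + Real.cos (2 * t)) / 2) ^ ((2 : ℝ) / 3)
      = 2 / Real.pi * (1 + Real.cos (2 * t)) ^ ((2 : ℝ) / 3) := by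
    rw [Real.div_rpow (by positivity) (by norm_num)]
    field_simp
  have cube : ∀ z a : ℝ, 0 < z → (z ^ (a / 3)) ^ 3 = z ^ a := fun z a hz => by
    rw [← Real.rpow_natCast, ← Real.rpow_mul hz.le]
    congr 1
    push_cast
    ring
  refine ⟨?_, ?_, ?_, ?_⟩
  · have h := aux_first (2 * t) hx0 hxpi
    rw [div_lt_iff₀ (by have : 0 < 1 - Real.cos (2 * t) := by linarith
                        positivity)] at h
    rw [lt_div_iff₀ hx0]
    have : (Real.pi - 2) / Real.pi = 1 - 2 / Real.pi := by field_simp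
    rw [this]
    linarith
  · have h := aux_low t ht0 (by linarith [Real.pi_lt_d2])
    have hst : 0 < Real.sin t := Real.sin_pos_of_pos_of_lt_pi ht0 (by linarith)
    rw [e1, show 2 * t / 2 = t by ring]
    apply lt_of_pow_lt_pow_left₀ 3 (by positivity)
    rw [cube _ _ hc, div_pow, lt_div_iff₀ (by positivity)]
    have : Real.cos t ^ (4 : ℝ) = Real.cos t ^ 4 := by exact_mod_cast Real.rpow_natCast _ 4
    rw [this, mul_pow]
    have := mul_lt_mul_of_pos_right h (pow_pos hc 3)
    linarith
  · rw [e3, e1, e2]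
    have h := aux_up t ht0 ht1
    apply lt_of_pow_lt_pow_left₀ 3 (by positivity)
    rw [mul_pow, cube _ _ (by positivity)]
    have : (2 * Real.cos t ^ 2) ^ (2 : ℝ) = 4 * Real.cos t ^ 4 := by
      rw [Real.rpow_two]; ring
    rw [this]
    calc _ = Real.sin t ^ 3 / (t ^ 3 * Real.cos t) * Real.cos t ^ 4 := by field_simp
      _ < 32 / Real.pi ^ 3 * Real.cos t ^ 4 := by gcongr
      _ = _ := by ring
  · rw [e3]
    have : (1 + Real.cos (2 * t)) ^ ((2 : ℝ) / 3) < (1 + Real.cos (2 * t)) ^ (1 : ℝ) :=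
      Real.rpow_lt_rpow_of_exponent_lt (by linarith) (by norm_num)
    rw [Real.rpow_one] at this
    calc _ < 2 / Real.pi * (1 + Real.cos (2 * t)) := by gcongr
      _ = _ := by ring
end

section
/- For all real x with 0 < x < π/2, the following two-sided inequality holds with α = 16/π − 4 and β = (π² − 8)/2: 16·(π − x)/(4π² + α·(2x − π)²) < (sin x)/x < 16·(π − x)/(4π² + β·(2x − π)²). -/
theorem aux_nonneg (f f' : ℝ → ℝ) (hf : ∀ t, HasDerivAt f (f' t) t) (h0 : f 0 = 0)
    (hp : ∀ t, 0 ≤ t → 0 ≤ f' t) (t : ℝ) (ht : 0 ≤ t) : 0 ≤ f t := by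
  have hm : MonotoneOn f (Set.Ici 0) := by
    refine monotoneOn_of_hasDerivWithinAt_nonneg (f' := f') (convex_Ici 0)
      (fun y _ => (hf y).continuousAt.continuousWithinAt)
      (fun y _ => (hf y).hasDerivWithinAt) (fun y hy => hp y ?_)
    exact interior_subset hy
  rw [← h0]
  exact hm (Set.mem_Ici.2 le_rfl) (Set.mem_Ici.2 ht) ht

theorem aux_pow_s19 (n : ℕ) (c t : ℝ) :
    HasDerivAt (fun y : ℝ => y ^ n / c) ((n : ℝ) * t ^ (n - 1) / c) t :=
  (hasDerivAt_pow n t).div_const c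

theorem aux_c4 (t : ℝ) (ht : 0 ≤ t) : Real.cos t ≤ 1 - t ^ 2 / 2 + t ^ 4 / 24 := by
  have := aux_nonneg (fun t => 1 - t ^ 2 / 2 + t ^ 4 / 24 - Real.cos t)
    (fun t => Real.sin t - (t - t ^ 3 / 6)) (fun t => by
      have := ((((aux_pow_s19 2 2 t).const_sub 1)).add (aux_pow_s19 4 24 t)).sub (Real.hasDerivAt_cos t)
      refine this.congr_deriv ?_
      push_cast; norm_num; ring) (by simp)
    (fun t ht => by have := Real.sin_ge_sub_cube ht; linarith) t ht
  linarith

theorem aux_s5 (t : ℝ) (ht : 0 ≤ t) : Real.sin t ≤ t - t ^ 3 / 6 + t ^ 5 / 120 := by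
  have := aux_nonneg (fun t => t - t ^ 3 / 6 + t ^ 5 / 120 - Real.sin t)
    (fun t => 1 - t ^ 2 / 2 + t ^ 4 / 24 - Real.cos t) (fun t => by
      have := (((hasDerivAt_id t).sub (aux_pow_s19 3 6 t)).add (aux_pow_s19 5 120 t)).sub
        (Real.hasDerivAt_sin t)
      refine this.congr_deriv ?_
      push_cast; norm_num; ring) (by simp)
    (fun t ht => by have := aux_c4 t ht; linarith) t ht
  linarith

theorem aux_c6 (t : ℝ) (ht : 0 ≤ t) :
    1 - t ^ 2 / 2 + t ^ 4 / 24 - t ^ 6 / 720 ≤ Real.cos t := by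
  have := aux_nonneg (fun t => Real.cos t - (1 - t ^ 2 / 2 + t ^ 4 / 24 - t ^ 6 / 720))
    (fun t => t - t ^ 3 / 6 + t ^ 5 / 120 - Real.sin t) (fun t => by
      have := (Real.hasDerivAt_cos t).sub
        ((((aux_pow_s19 2 2 t).const_sub 1).add (aux_pow_s19 4 24 t)).sub (aux_pow_s19 6 720 t))
      refine this.congr_deriv ?_
      push_cast; norm_num; ring) (by simp)
    (fun t ht => by have := aux_s5 t ht; linarith) t ht
  linarith

theorem aux_s7 (t : ℝ) (ht : 0 ≤ t) :
    t - t ^ 3 / 6 + t ^ 5 / 120 - t ^ 7 / 5040 ≤ Real.sin t := by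
  have := aux_nonneg (fun t => Real.sin t - (t - t ^ 3 / 6 + t ^ 5 / 120 - t ^ 7 / 5040))
    (fun t => Real.cos t - (1 - t ^ 2 / 2 + t ^ 4 / 24 - t ^ 6 / 720)) (fun t => by
      have := (Real.hasDerivAt_sin t).sub
        ((((hasDerivAt_id t).sub (aux_pow_s19 3 6 t)).add (aux_pow_s19 5 120 t)).sub (aux_pow_s19 7 5040 t))
      refine this.congr_deriv ?_
      push_cast; norm_num; ring) (by simp)
    (fun t ht => by have := aux_c6 t ht; linarith) t ht
  linarith

theorem aux_c8 (t : ℝ) (ht : 0 ≤ t) :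
    Real.cos t ≤ 1 - t ^ 2 / 2 + t ^ 4 / 24 - t ^ 6 / 720 + t ^ 8 / 40320 := by
  have := aux_nonneg
    (fun t => 1 - t ^ 2 / 2 + t ^ 4 / 24 - t ^ 6 / 720 + t ^ 8 / 40320 - Real.cos t)
    (fun t => Real.sin t - (t - t ^ 3 / 6 + t ^ 5 / 120 - t ^ 7 / 5040)) (fun t => by
      have := (((((aux_pow_s19 2 2 t).const_sub 1).add (aux_pow_s19 4 24 t)).sub (aux_pow_s19 6 720 t)).add
        (aux_pow_s19 8 40320 t)).sub (Real.hasDerivAt_cos t)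
      refine this.congr_deriv ?_
      push_cast; norm_num; ring) (by simp)
    (fun t ht => by have := aux_s7 t ht; linarith) t ht
  linarith

theorem aux_upper_t (P s c : ℝ) (h1 : 9.8695 < P) (h2 : P < 9.8697) (hs : 0 < s) (hs2 : s ≤ 1.69)
    (hc : c ≤ 1 - s / 2 + s ^ 2 / 24 - s ^ 3 / 720 + s ^ 4 / 40320) :
    c * (P + (P - 8) / 2 * s) < P - 4 * s := by
  have hpos : 0 < P + (P - 8) / 2 * s := by nlinarith
  have h := mul_le_mul_of_nonneg_right hc hpos.le
  have key : 0 < (5 * P / 24 - 2) - s * (14 * P / 720 - 1 / 6)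
      + s ^ 2 * (((P - 8) / 1440 - P / 40320) - s * ((P - 8) / 80640)) := by
    have a1 : s * (14 * P / 720 - 1 / 6) ≤ 1.69 * 0.0253 :=
      mul_le_mul hs2 (by linarith) (by linarith) (by norm_num)
    have a2 : s * ((P - 8) / 80640) ≤ 1.69 * 0.00003 :=
      mul_le_mul hs2 (by linarith) (by linarith) (by norm_num)
    have a3 : 0 ≤ s ^ 2 * (((P - 8) / 1440 - P / 40320) - s * ((P - 8) / 80640)) :=
      mul_nonneg (by positivity) (by linarith)
    linarith
  have := mul_pos (pow_pos hs 2) key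
  linarith

theorem aux_lower_t (P a s c : ℝ) (h1 : 9.8695 < P) (h2 : P < 9.8697) (ha : 1.0928 < a)
    (ha2 : a < 1.0931) (hs : 0 < s) (hs2 : s ≤ 1)
    (hc : 1 - s / 2 + s ^ 2 / 24 - s ^ 3 / 720 ≤ c) :
    P - 4 * s < c * (P + a * s) := by
  have hpos : 0 < P + a * s := by nlinarith
  have h := mul_le_mul_of_nonneg_right hc hpos.le
  have key : 0 < (a - P / 2 + 4) - s * (a / 2 - P / 24) + s ^ 2 * (a / 24 - P / 720)
      - s ^ 3 * (a / 720) := by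
    have a1 : s * (a / 2 - P / 24) ≤ 1 * 0.1354 :=
      mul_le_mul hs2 (by linarith) (by linarith) (by norm_num)
    have a2 : s ^ 3 * (a / 720) ≤ 1 * 0.002 :=
      mul_le_mul (pow_le_one₀ hs.le hs2) (by linarith) (by linarith) (by norm_num)
    have a3 : 0 ≤ s ^ 2 * (a / 24 - P / 720) :=
      mul_nonneg (by positivity) (by linarith)
    linarith
  have := mul_pos hs key
  linarith

theorem sin_div_shifted_redheffer (x : ℝ) (hx0 : 0 < x) (hxpi : x < Real.pi / 2) :
    16 * (Real.pi - x) / (4 * Real.pi ^ 2 + (16 / Real.pi - 4) * (2 * x - Real.pi) ^ 2) <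
      Real.sin x / x ∧
    Real.sin x / x <
      16 * (Real.pi - x) / (4 * Real.pi ^ 2 + ((Real.pi ^ 2 - 8) / 2) * (2 * x - Real.pi) ^ 2) := by
  have p1 := Real.pi_gt_d6
  have p2 := Real.pi_lt_d6
  have hcos : Real.sin x = Real.cos (Real.pi / 2 - x) := (Real.cos_pi_div_two_sub x).symm
  have hs1 := Real.sin_lt hx0
  have hs2 := Real.sin_gt_sub_cube hx0
  generalize hS : Real.sin x = S at *
  generalize Real.pi = p at *
  have hP1 : 9.8695 < p ^ 2 := by nlinarith
  have hP2 : p ^ 2 < 9.8697 := by nlinarith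
  obtain ⟨a, ha⟩ : ∃ a, a = 16 / p - 4 := ⟨_, rfl⟩
  have hap : a * p = 16 - 4 * p := by rw [ha]; field_simp
  have ha1 : 1.0928 < a := by nlinarith
  have ha2 : a < 1.0931 := by nlinarith
  rw [← ha]
  have ht : 0 < p / 2 - x := by linarith
  have hsq : 0 < (p / 2 - x) ^ 2 := by positivity
  constructor
  · rw [div_lt_div_iff₀ (by positivity) hx0]
    have : p ^ 2 - 4 * (p / 2 - x) ^ 2 < S * (p ^ 2 + a * (p / 2 - x) ^ 2) := by
      by_cases hc : p / 2 - x ≤ 1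
      · refine aux_lower_t _ _ _ _ hP1 hP2 ha1 ha2 hsq (pow_le_one₀ ht.le hc) ?_
        have := aux_c6 _ ht.le
        rw [hcos]
        linarith
      · have hx1 : x < 0.5708 := by linarith
        have hpos : 0 < p ^ 2 + a * (p / 2 - x) ^ 2 := by positivity
        have h := mul_lt_mul_of_pos_right hs2 hpos
        have e : (x - x ^ 3 / 6) * (p ^ 2 + a * (p / 2 - x) ^ 2)
            - (p ^ 2 - 4 * (p / 2 - x) ^ 2) = x ^ 2 * ((4 * p - 12) - x * (2 * p / 3 - a)
              + x ^ 2 * ((16 - 4 * p) / 6 - x * a / 6)) := by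
          linear_combination (x - x ^ 3 / 6) * (p / 4 - x) * hap
        have key : 0 < (4 * p - 12) - x * (2 * p / 3 - a)
              + x ^ 2 * ((16 - 4 * p) / 6 - x * a / 6) := by
          have a1 : x * (2 * p / 3 - a) ≤ 0.5708 * 1.0017 :=
            mul_le_mul hx1.le (by linarith) (by linarith) (by norm_num)
          have a2 : x * a ≤ 0.5708 * 1.0931 :=
            mul_le_mul hx1.le (by linarith) (by linarith) (by norm_num)
          nlinarith [sq_nonneg (x - 0.5708), mul_pos hx0 (sub_pos.2 hx1)]
        have := mul_pos (pow_pos hx0 2) key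
        linarith
    nlinarith
  · have hb : 0 < (p ^ 2 - 8) / 2 := by linarith
    rw [div_lt_div_iff₀ hx0 (by positivity)]
    have : S * (p ^ 2 + (p ^ 2 - 8) / 2 * (p / 2 - x) ^ 2) < p ^ 2 - 4 * (p / 2 - x) ^ 2 := by
      by_cases hc : p / 2 - x ≤ 1.3
      · refine aux_upper_t _ _ _ hP1 hP2 hsq (by nlinarith) ?_
        have := aux_c8 _ ht.le
        rw [hcos]
        linarith
      · have hx1 : x < 0.2708 := by linarith
        have hpos : 0 < p ^ 2 + (p ^ 2 - 8) / 2 * (p / 2 - x) ^ 2 := by positivity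
        have h := mul_lt_mul_of_pos_right hs1 hpos
        have b1 : (p / 2 - x) ^ 2 ≤ (p / 2) ^ 2 - p * x + 0.2708 * x := by nlinarith
        have b2 : (p ^ 2 - 8) / 2 * (p / 2 - x) ^ 2 ≤
            (p ^ 2 - 8) / 2 * ((p / 2) ^ 2 - p * x + 0.2708 * x) :=
          mul_le_mul_of_nonneg_left b1 hb.le
        have b3 : 0.93475 * ((p - 0.2708) * x) ≤ (p ^ 2 - 8) / 2 * ((p - 0.2708) * x) :=
          mul_le_mul_of_nonneg_right (by linarith) (mul_nonneg (by linarith) hx0.le)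
        have b4 : (p ^ 2 - 8) / 2 * (p ^ 2) ≤ 0.93485 * 9.8697 :=
          mul_le_mul (by linarith) hP2.le (by positivity) (by norm_num)
        have b5 : 2.87 * x ≤ (p - 0.2708) * x := mul_le_mul_of_nonneg_right (by linarith) hx0.le
        have key : p ^ 2 + (p ^ 2 - 8) / 2 * (p / 2 - x) ^ 2 < 4 * (p - x) := by
          linarith
        have := mul_lt_mul_of_pos_left key hx0
        linarith
    nlinarith
end
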